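/- arXiv:math-ph/9904013 — 2 statements merged into one kernel-verified Lean document; each statement's English description precedes it below -/
import Mathlib

section
/- Let n ≥ 4 be an integer and let μ₂ be the admissible diffusive profile. Then there exists a constant C > 0 such that e^{y²/4} y^{1−2ε} μ₂(y) → C as y → ∞; in particular μ₂ decays like C e^{−y²/4}/y^{1−2ε} at infinity. -/
noncomputable def kap : ℝ := 1 / Real.sqrt Real.pi

noncomputable def eps (n : ℕ) : ℝ := 1 / ((n : ℝ) - 1)

noncomputable def del (n : ℕ) : ℝ := ((n : ℝ) + 2) / ((n : ℝ) - 1)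

noncomputable def lam (n : ℕ) : ℝ :=
  (del n * (del n + 1) / (2 * kap) ^ n) ^ (1 / ((n : ℝ) - 1))

noncomputable def mu1 (y : ℝ) : ℝ :=
  (2 / Real.sqrt Real.pi) * ∫ σ in (0:ℝ)..(y / 2), Real.exp (-σ ^ 2)

def IsDiffusiveProfile (n : ℕ) (μ : ℝ → ℝ) : Prop :=
  ContDiffOn ℝ 2 μ (Set.Ioi 0) ∧
  (∀ y ∈ Set.Ioi (0:ℝ), 0 < μ y) ∧
  (∀ y ∈ Set.Ioi (0:ℝ),
    deriv (deriv μ) y + y / 2 * deriv μ y + eps n * μ y = (2 * mu1 y * μ y) ^ n) ∧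
  Filter.Tendsto (fun y : ℝ => y ^ del n * μ y) (nhdsWithin 0 (Set.Ioi 0)) (nhds (lam n)) ∧
  Filter.Tendsto (fun y : ℝ => y ^ (2 * eps n) * μ y) Filter.atTop (nhds 0)

open Set Filter Topology Real Asymptotics MeasureTheory

/-!
Far out the profile solves the linear equation `u'' + (y / 2) u' + ε u = q u` with
`y ^ 2 * q y → 0`. Its slow solutions behave like `y ^ (-2 * ε)`, so put `w = y ^ (2 * ε) * u`,
which removes the zeroth order term to leading order and turns the decay hypothesis into `w → 0`:
`w'' + (y / 2 - s / y) w' + b w = 0` with `s = 4 * ε` and `0 ≤ b = O(y ^ (-2))`.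
With the integrating factor `W = exp (y ^ 2 / 4) * y ^ (-s)`, the flux `-W w'` is nondecreasing.
Since `w > 0` tends to zero it must become positive, i.e. `w' < 0`. A corrected combination of `w'`
and `w` is monotone as well and yields `y * w ≤ -8 * w'`, so the logarithmic derivative
`-b * w / w'` of the flux is `O(y ^ (-3))` and the flux has a positive limit. L'Hôpital's rule
passes from the flux to `w`.
-/

section Asymptotics

theorem tendsto_const_div_sq_atTop (K : ℝ) : Tendsto (fun y : ℝ => K / y ^ 2) atTop (𝓝 0) :=
  tendsto_const_nhds.div_atTop (tendsto_pow_atTop two_ne_zero)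

theorem exists_monotoneOn_Ici_of_hasDerivAt_nonneg {f f' : ℝ → ℝ}
    (hf : ∀ᶠ y in atTop, HasDerivAt f (f' y) y) (hf' : ∀ᶠ y in atTop, 0 ≤ f' y) :
    ∃ a, MonotoneOn f (Ici a) := by
  obtain ⟨a, ha⟩ := eventually_atTop.1 (hf.and hf')
  exact ⟨a, monotoneOn_of_hasDerivWithinAt_nonneg (convex_Ici a)
    (fun y hy => (ha y hy).1.continuousAt.continuousWithinAt)
    (fun y hy => (ha y (interior_subset hy)).1.hasDerivWithinAt)
    (fun y hy => (ha y (interior_subset hy)).2)⟩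

theorem eventually_le_of_hasDerivAt_nonneg_of_le_tendsto {f f' g : ℝ → ℝ} {c : ℝ}
    (hf : ∀ᶠ y in atTop, HasDerivAt f (f' y) y) (hf' : ∀ᶠ y in atTop, 0 ≤ f' y)
    (hfg : ∀ᶠ y in atTop, f y ≤ g y) (hg : Tendsto g atTop (𝓝 c)) :
    ∀ᶠ y in atTop, f y ≤ c := by
  obtain ⟨a, ha⟩ := exists_monotoneOn_Ici_of_hasDerivAt_nonneg hf hf'
  filter_upwards [eventually_ge_atTop a] with y hy
  refine ge_of_tendsto hg ?_
  filter_upwards [hfg, eventually_ge_atTop y] with z hz hyz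
  exact (ha hy (hy.trans hyz) hyz).trans hz

theorem exists_tendsto_atTop_of_hasDerivAt_of_isBigO {E : Type*} [NormedAddCommGroup E]
    [NormedSpace ℝ E] [CompleteSpace E] {f f' : ℝ → E} {g : ℝ → ℝ}
    (hf : ∀ᶠ y in atTop, HasDerivAt f (f' y) y) (hf' : f' =O[atTop] g)
    (hg : IntegrableAtFilter g atTop) : ∃ l, Tendsto f atTop (𝓝 l) := by
  have hderiv : f' =ᶠ[atTop] deriv f := hf.mono fun y hy => hy.deriv.symm
  have hint : IntegrableAtFilter (deriv f) atTop :=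
    (hf'.congr' hderiv .rfl).integrableAtFilter
      ⟨univ, univ_mem, aestronglyMeasurable_deriv f _⟩ hg
  obtain ⟨t, ht, htint⟩ := hint
  obtain ⟨a, ha⟩ := eventually_atTop.1 (hf.and ht)
  refine ⟨_, tendsto_limUnder_of_hasDerivAt_of_integrableOn_Ioi (a := a)
    (fun y hy => (ha y hy.le).1.differentiableAt.hasDerivAt)
    (htint.mono_set fun y hy => (ha y hy.le).2)⟩

end Asymptotics

section DriftWeight

/-- The integrating factor of the drift `y / 2 - s / y`: the equation
`w'' + (y / 2 - s / y) w' + b w = 0` reads `(driftWeight s * w')' = -driftWeight s * b * w`. -/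
noncomputable def driftWeight (s y : ℝ) : ℝ :=
  exp (y ^ 2 / 4) * y ^ (-s)

variable {s y : ℝ}

theorem driftWeight_pos (hy : 0 < y) : 0 < driftWeight s y := by
  unfold driftWeight
  positivity

theorem driftWeight_mul_rpow (hy : 0 < y) (t : ℝ) :
    driftWeight s y * y ^ t = driftWeight (s - t) y := by
  rw [driftWeight, driftWeight, mul_assoc, ← rpow_add hy, neg_sub', sub_neg_eq_add]

theorem hasDerivAt_driftWeight (hy : y ≠ 0) :
    HasDerivAt (driftWeight s) ((y / 2 - s / y) * driftWeight s y) y := by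
  have hexp : HasDerivAt (fun y : ℝ => exp (y ^ 2 / 4)) (exp (y ^ 2 / 4) * (y / 2)) y := by
    convert! ((hasDerivAt_pow 2 y).div_const 4).exp using 1
    ring
  refine (hexp.mul (hasDerivAt_rpow_const (p := -s) (Or.inl hy))).congr_deriv ?_
  rw [driftWeight, rpow_sub_one hy]
  ring

theorem tendsto_inv_driftWeight_atTop (s : ℝ) :
    Tendsto (fun y => (driftWeight s y)⁻¹) atTop (𝓝 0) := by
  have hexp : Tendsto (fun y : ℝ => exp (-(1 / 2) * y)) atTop (𝓝 0) :=
    tendsto_exp_atBot.comp (tendsto_id.const_mul_atTop_of_neg (by norm_num))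
  refine ((rpow_mul_exp_neg_mul_sq_isLittleO_exp_neg (b := 1 / 4) (by norm_num) s).trans_tendsto
    hexp).congr' ?_
  filter_upwards [eventually_gt_atTop 0] with y hy
  rw [driftWeight, mul_inv, ← exp_neg, rpow_neg hy.le, inv_inv, mul_comm]
  ring_nf

end DriftWeight

/-- Positive recessive solutions, i.e. those tending to `0`, of `w'' + (y / 2 - s / y) w' + b w = 0`
near infinity, with a potential `0 ≤ b ≤ B / y ^ 2`; `w'` stands for the derivative of `w`. -/
structure IsRecessiveSolution (s B : ℝ) (b w w' : ℝ → ℝ) : Prop where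
  potential_nonneg : ∀ᶠ y in atTop, 0 ≤ b y
  potential_le : ∀ᶠ y in atTop, b y ≤ B / y ^ 2
  pos : ∀ᶠ y in atTop, 0 < w y
  hasDerivAt : ∀ᶠ y in atTop, HasDerivAt w (w' y) y
  hasDerivAt_deriv : ∀ᶠ y in atTop, HasDerivAt w' (-(y / 2 - s / y) * w' y - b y * w y) y
  tendsto_zero : Tendsto w atTop (𝓝 0)

namespace IsRecessiveSolution

variable {s B : ℝ} {b w w' : ℝ → ℝ}

theorem hasDerivAt_flux (hw : IsRecessiveSolution s B b w w') :
    ∀ᶠ y in atTop, HasDerivAt (fun y => -(driftWeight s y * w' y))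
      (driftWeight s y * (b y * w y)) y := by
  filter_upwards [hw.hasDerivAt_deriv, eventually_ne_atTop 0] with y hw' hy
  exact ((hasDerivAt_driftWeight hy).mul hw').neg.congr_deriv (by ring)

theorem deriv_neg (hw : IsRecessiveSolution s B b w w') : ∀ᶠ y in atTop, w' y < 0 := by
  have hflux_nonneg : ∀ᶠ y in atTop, 0 ≤ driftWeight s y * (b y * w y) := by
    filter_upwards [hw.potential_nonneg, hw.pos, eventually_gt_atTop 0] with y hb hwy hy
    exact mul_nonneg (driftWeight_pos hy).le (mul_nonneg hb hwy.le)
  obtain ⟨a, ha⟩ := exists_monotoneOn_Ici_of_hasDerivAt_nonneg hw.hasDerivAt_flux hflux_nonneg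
  by_contra hneg
  have hfreq : ∃ᶠ y in atTop, 0 ≤ w' y := by simpa only [not_eventually, not_lt] using hneg
  have hderiv_nonneg : ∀ᶠ y in atTop, 0 ≤ w' y := by
    filter_upwards [eventually_ge_atTop a, eventually_gt_atTop 0] with y hay hy
    obtain ⟨z, hyz, hz⟩ := frequently_atTop.1 hfreq y
    have hflux := ha hay (hay.trans hyz) hyz
    have hz' := mul_nonneg (driftWeight_pos (s := s) (hy.trans_le hyz)).le hz
    exact nonneg_of_mul_nonneg_right (by linarith) (driftWeight_pos (s := s) hy)
  have hw_nonpos := eventually_le_of_hasDerivAt_nonneg_of_le_tendsto hw.hasDerivAt hderiv_nonneg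
    (.of_forall fun _ => le_rfl) hw.tendsto_zero
  obtain ⟨y, hy, hy'⟩ := (hw.pos.and hw_nonpos).exists
  exact hy.not_ge hy'

-- The correction `-B / (2 * y ^ 2)` absorbs the potential term `b * w / y` of the derivative.
theorem hasDerivAt_comparison (hw : IsRecessiveSolution s B b w w') :
    ∀ᶠ y in atTop, HasDerivAt (fun y => w' y / y + (1 / 4 - B / 2 / y ^ 2) * w y)
      (-w' y * (1 / 4 + (1 - s + B / 2) / y ^ 2) + (B / y ^ 2 - b y) * w y / y) y := by
  filter_upwards [hw.hasDerivAt, hw.hasDerivAt_deriv, eventually_ne_atTop 0] with y hwy hwy' hy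
  have hcoeff :=
    ((hasDerivAt_const y (B / 2)).div (hasDerivAt_pow 2 y) (pow_ne_zero 2 hy)).const_sub (1 / 4)
  refine ((hwy'.div (hasDerivAt_id y) hy).add (hcoeff.mul hwy)).congr_deriv ?_
  simp only [id, Pi.div_apply]
  field_simp
  ring

theorem deriv_le (hw : IsRecessiveSolution s B b w w') :
    ∀ᶠ y in atTop, w' y ≤ -(y / 8 * w y) := by
  have hB : ∀ᶠ y : ℝ in atTop, B / 2 / y ^ 2 < 1 / 8 :=
    (tendsto_const_div_sq_atTop _).eventually_lt_const (by norm_num)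
  have hdrift : ∀ᶠ y : ℝ in atTop, -(1 / 4) < (1 - s + B / 2) / y ^ 2 :=
    (tendsto_const_div_sq_atTop _).eventually_const_lt (by norm_num)
  have hderiv_nonneg : ∀ᶠ y in atTop,
      0 ≤ -w' y * (1 / 4 + (1 - s + B / 2) / y ^ 2) + (B / y ^ 2 - b y) * w y / y := by
    filter_upwards [hw.deriv_neg, hw.pos, hw.potential_le, hdrift, eventually_gt_atTop 0]
      with y hwy' hwy hb hdrift_y hy
    exact add_nonneg (mul_nonneg (by linarith) (by linarith))
      (div_nonneg (mul_nonneg (sub_nonneg.2 hb) hwy.le) hy.le)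
  have hle : ∀ᶠ y in atTop,
      w' y / y + (1 / 4 - B / 2 / y ^ 2) * w y ≤ (1 / 4 - B / 2 / y ^ 2) * w y := by
    filter_upwards [hw.deriv_neg, eventually_gt_atTop 0] with y hwy' hy
    linarith [div_neg_of_neg_of_pos hwy' hy]
  have hlim : Tendsto (fun y => (1 / 4 - B / 2 / y ^ 2) * w y) atTop (𝓝 0) := by
    simpa only [mul_zero] using
      ((tendsto_const_div_sq_atTop (B / 2)).const_sub (1 / 4)).mul hw.tendsto_zero
  filter_upwards [eventually_le_of_hasDerivAt_nonneg_of_le_tendsto hw.hasDerivAt_comparison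
    hderiv_nonneg hle hlim, hB, hw.pos, eventually_gt_atTop 0] with y hcomp hBy hwy hy
  have hquot : w' y / y ≤ -(1 / 8 * w y) := by nlinarith
  calc w' y ≤ -(1 / 8 * w y) * y := (div_le_iff₀ hy).1 hquot
    _ = -(y / 8 * w y) := by ring

theorem hasDerivAt_log_flux (hw : IsRecessiveSolution s B b w w') :
    ∀ᶠ y in atTop, HasDerivAt (fun y => log (-(driftWeight s y * w' y)))
      (b y * (w y / -w' y)) y := by
  filter_upwards [hw.hasDerivAt_flux, hw.deriv_neg, eventually_gt_atTop 0] with y hflux hwy' hy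
  have hW := (driftWeight_pos (s := s) hy).ne'
  have hne := hwy'.ne
  refine (hflux.log (neg_ne_zero.2 (mul_ne_zero hW hne))).congr_deriv ?_
  field_simp

theorem logDeriv_flux_isBigO (hw : IsRecessiveSolution s B b w w') :
    (fun y => b y * (w y / -w' y)) =O[atTop] fun y : ℝ => y ^ (-3 : ℝ) := by
  refine IsBigO.of_bound (8 * B) ?_
  filter_upwards [hw.potential_nonneg, hw.potential_le, hw.pos, hw.deriv_neg, hw.deriv_le,
    eventually_gt_atTop 0] with y hb hbB hwy hwy' hle hy
  have hratio : w y / -w' y ≤ 8 / y := by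
    rw [div_le_div_iff₀ (neg_pos.2 hwy') hy]
    linarith
  have hratio_nonneg : 0 ≤ w y / -w' y := div_nonneg hwy.le (neg_pos.2 hwy').le
  rw [norm_of_nonneg (mul_nonneg hb hratio_nonneg), norm_of_nonneg (rpow_nonneg hy.le _)]
  calc b y * (w y / -w' y) ≤ B / y ^ 2 * (8 / y) :=
        mul_le_mul hbB hratio hratio_nonneg (hb.trans hbB)
    _ = 8 * B * y ^ (-3 : ℝ) := by
        rw [rpow_neg hy.le, show (3 : ℝ) = (3 : ℕ) by norm_num, rpow_natCast]
        field_simp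

theorem exists_tendsto_flux (hw : IsRecessiveSolution s B b w w') :
    ∃ l, 0 < l ∧ Tendsto (fun y => -(driftWeight s y * w' y)) atTop (𝓝 l) := by
  obtain ⟨l, hl⟩ := exists_tendsto_atTop_of_hasDerivAt_of_isBigO hw.hasDerivAt_log_flux
    hw.logDeriv_flux_isBigO (integrableAtFilter_rpow_atTop_iff.2 (by norm_num))
  refine ⟨exp l, exp_pos l, ((continuous_exp.tendsto l).comp hl).congr' ?_⟩
  filter_upwards [hw.deriv_neg, eventually_gt_atTop 0] with y hwy' hy
  exact exp_log (neg_pos.2 (mul_neg_of_pos_of_neg (driftWeight_pos hy) hwy'))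

theorem exists_tendsto_driftWeight_mul (hw : IsRecessiveSolution s B b w w') :
    ∃ C, 0 < C ∧ Tendsto (fun y => driftWeight (s - 1) y * w y) atTop (𝓝 C) := by
  obtain ⟨l, hl_pos, hl⟩ := hw.exists_tendsto_flux
  have hdenom : Tendsto (fun y : ℝ => 1 / 2 - (s - 1) / y ^ 2) atTop (𝓝 (1 / 2)) := by
    simpa only [sub_zero] using (tendsto_const_div_sq_atTop (s - 1)).const_sub (1 / 2)
  have hdenom_pos : ∀ᶠ y : ℝ in atTop, 0 < 1 / 2 - (s - 1) / y ^ 2 :=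
    hdenom.eventually_const_lt (by norm_num)
  have hderiv : ∀ᶠ y in atTop, HasDerivAt (fun y => (driftWeight (s - 1) y)⁻¹)
      (-((1 / 2 - (s - 1) / y ^ 2) / driftWeight s y)) y := by
    filter_upwards [eventually_gt_atTop 0] with y hy
    have hW := (driftWeight_pos (s := s) hy).ne'
    have hshift : driftWeight (s - 1) y = driftWeight s y * y := by
      simpa only [rpow_one] using (driftWeight_mul_rpow (s := s) hy 1).symm
    refine ((hasDerivAt_driftWeight hy.ne').fun_inv (driftWeight_pos hy).ne').congr_deriv ?_
    rw [hshift]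
    field_simp
  refine ⟨l / (1 / 2), by positivity, ?_⟩
  refine (HasDerivAt.lhopital_zero_atTop hw.hasDerivAt hderiv ?_ hw.tendsto_zero
    (tendsto_inv_driftWeight_atTop _) ?_).congr fun y => by rw [div_inv_eq_mul, mul_comm]
  · filter_upwards [hdenom_pos, eventually_gt_atTop 0] with y hd hy
    exact neg_ne_zero.2 (div_pos hd (driftWeight_pos hy)).ne'
  · refine (hl.div hdenom (by norm_num)).congr fun y => ?_
    simp only [Pi.div_apply]
    rw [div_neg, div_div_eq_mul_div, neg_div, mul_comm (w' y)]

end IsRecessiveSolution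

section LinearEquation

theorem hasDerivAt_rpow_mul {u : ℝ → ℝ} {α u' y : ℝ} (hu : HasDerivAt u u' y) (hy : y ≠ 0) :
    HasDerivAt (fun y => y ^ α * u y) (y ^ α * (u' + α / y * u y)) y := by
  refine ((hasDerivAt_rpow_const (p := α) (Or.inl hy)).mul hu).congr_deriv ?_
  rw [rpow_sub_one hy]
  ring

variable {ε K : ℝ} {q u u' u'' : ℝ → ℝ}

theorem isRecessiveSolution_rpow_mul (hpos : ∀ᶠ y in atTop, 0 < u y)
    (hu : ∀ᶠ y in atTop, HasDerivAt u (u' y) y) (hu' : ∀ᶠ y in atTop, HasDerivAt u' (u'' y) y)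
    (hode : ∀ᶠ y in atTop, u'' y + y / 2 * u' y + ε * u y = q y * u y)
    (hq_ge : ∀ᶠ y in atTop, -K ≤ y ^ 2 * q y)
    (hq_le : ∀ᶠ y in atTop, y ^ 2 * q y ≤ 2 * ε * (2 * ε + 1))
    (hdecay : Tendsto (fun y => y ^ (2 * ε) * u y) atTop (𝓝 0)) :
    IsRecessiveSolution (4 * ε) (2 * ε * (2 * ε + 1) + K)
      (fun y => 2 * ε * (2 * ε + 1) / y ^ 2 - q y) (fun y => y ^ (2 * ε) * u y)
      (fun y => y ^ (2 * ε) * (u' y + 2 * ε / y * u y)) where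
  potential_nonneg := by
    filter_upwards [hq_le, eventually_gt_atTop 0] with y hq hy
    rw [sub_nonneg, le_div_iff₀ (by positivity)]
    linarith
  potential_le := by
    filter_upwards [hq_ge, eventually_gt_atTop 0] with y hq hy
    rw [add_div, sub_eq_add_neg, add_le_add_iff_left, le_div_iff₀ (by positivity)]
    linarith
  pos := by
    filter_upwards [hpos, eventually_gt_atTop 0] with y huy hy
    positivity
  hasDerivAt := by
    filter_upwards [hu, eventually_ne_atTop 0] with y huy hy
    exact hasDerivAt_rpow_mul huy hy
  hasDerivAt_deriv := by
    filter_upwards [hu, hu', hode, eventually_ne_atTop 0] with y huy huy' hodey hy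
    have hinner := huy'.add
      (((hasDerivAt_const y (2 * ε)).div (hasDerivAt_id y) hy).mul huy)
    refine (hasDerivAt_rpow_mul hinner hy).congr_deriv ?_
    rw [show u'' y = q y * u y - ε * u y - y / 2 * u' y by linarith]
    simp only [id, Pi.add_apply, Pi.mul_apply, Pi.div_apply]
    field_simp
    ring
  tendsto_zero := hdecay

theorem exists_tendsto_driftWeight_mul_of_linear (hpos : ∀ᶠ y in atTop, 0 < u y)
    (hu : ∀ᶠ y in atTop, HasDerivAt u (u' y) y) (hu' : ∀ᶠ y in atTop, HasDerivAt u' (u'' y) y)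
    (hode : ∀ᶠ y in atTop, u'' y + y / 2 * u' y + ε * u y = q y * u y)
    (hq_ge : ∀ᶠ y in atTop, -K ≤ y ^ 2 * q y)
    (hq_le : ∀ᶠ y in atTop, y ^ 2 * q y ≤ 2 * ε * (2 * ε + 1))
    (hdecay : Tendsto (fun y => y ^ (2 * ε) * u y) atTop (𝓝 0)) :
    ∃ C, 0 < C ∧ Tendsto (fun y => driftWeight (2 * ε - 1) y * u y) atTop (𝓝 C) := by
  obtain ⟨C, hC_pos, hC⟩ := (isRecessiveSolution_rpow_mul hpos hu hu' hode hq_ge hq_le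
    hdecay).exists_tendsto_driftWeight_mul
  refine ⟨C, hC_pos, hC.congr' ?_⟩
  filter_upwards [eventually_gt_atTop 0] with y hy
  rw [← mul_assoc, driftWeight_mul_rpow hy]
  ring_nf

end LinearEquation

section DiffusiveProfile

theorem eps_pos {n : ℕ} (hn : 2 ≤ n) : 0 < eps n := by
  have hn' : (2 : ℝ) ≤ n := by exact_mod_cast hn
  exact one_div_pos.2 (by linarith)

theorem mu1_nonneg {y : ℝ} (hy : 0 ≤ y) : 0 ≤ mu1 y :=
  mul_nonneg (by positivity)
    (intervalIntegral.integral_nonneg (by positivity) fun σ _ => (exp_pos (-σ ^ 2)).le)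

theorem mu1_le_one {y : ℝ} (hy : 0 ≤ y) : mu1 y ≤ 1 := by
  have hgauss : ∫ σ in (0 : ℝ)..(y / 2), exp (-σ ^ 2) ≤ √π / 2 := by
    calc ∫ σ in (0 : ℝ)..(y / 2), exp (-σ ^ 2) = ∫ σ in Ioc 0 (y / 2), exp (-σ ^ 2) :=
          intervalIntegral.integral_of_le (by positivity)
      _ ≤ ∫ σ in Ioi 0, exp (-σ ^ 2) :=
          setIntegral_mono_set (by simpa using (integrable_exp_neg_mul_sq one_pos).integrableOn)
            (.of_forall fun σ => (exp_pos _).le) (.of_forall fun σ hσ => hσ.1)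
      _ = √π / 2 := by simpa using integral_gaussian_Ioi 1
  calc mu1 y ≤ 2 / √π * (√π / 2) := by unfold mu1; gcongr
    _ = 1 := by field_simp

theorem rpow_two_mul_eps_pow {n : ℕ} (hn : 2 ≤ n) {y : ℝ} (hy : 0 ≤ y) :
    (y ^ (2 * eps n)) ^ (n - 1) = y ^ 2 := by
  have hn' : (2 : ℝ) ≤ n := by exact_mod_cast hn
  have hexp : 2 * eps n * (n - 1 : ℕ) = (2 : ℕ) := by
    rw [eps, Nat.cast_pred (by lia)]
    have : (n : ℝ) - 1 ≠ 0 := by linarith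
    push_cast
    field_simp
  rw [← rpow_mul_natCast hy, hexp, rpow_natCast]

theorem tendsto_sq_mul_diffusive_potential {n : ℕ} (hn : 2 ≤ n) {μ : ℝ → ℝ}
    (hdecay : Tendsto (fun y => y ^ (2 * eps n) * μ y) atTop (𝓝 0)) :
    Tendsto (fun y => y ^ 2 * ((2 * mu1 y) ^ n * μ y ^ (n - 1))) atTop (𝓝 0) := by
  have hpow : Tendsto (fun y => (y ^ (2 * eps n) * μ y) ^ (n - 1)) atTop (𝓝 0) := by
    simpa only [zero_pow (show n - 1 ≠ 0 by lia)] using hdecay.pow (n - 1)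
  have hbdd : ∀ᶠ y in atTop, |(2 * mu1 y) ^ n| ≤ 2 ^ n := by
    filter_upwards [eventually_ge_atTop 0] with y hy
    have hmu1 := mu1_nonneg hy
    rw [abs_of_nonneg (by positivity)]
    exact pow_le_pow_left₀ (by positivity) (by linarith [mu1_le_one hy]) n
  refine (bdd_le_mul_tendsto_zero' _ hbdd hpow).congr' ?_
  filter_upwards [eventually_ge_atTop 0] with y hy
  rw [mul_pow (y ^ _), rpow_two_mul_eps_pow hn hy]
  ring

theorem diffusive_profile_gaussian_decay_general {n : ℕ} (hn : 2 ≤ n) {μ : ℝ → ℝ} {a : ℝ}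
    (hμ : ContDiffOn ℝ 2 μ (Ioi a)) (hpos : ∀ y ∈ Ioi a, 0 < μ y)
    (hode : ∀ y ∈ Ioi a,
      deriv (deriv μ) y + y / 2 * deriv μ y + eps n * μ y = (2 * mu1 y * μ y) ^ n)
    (hdecay : Tendsto (fun y => y ^ (2 * eps n) * μ y) atTop (𝓝 0)) :
    ∃ C, 0 < C ∧
      Tendsto (fun y => exp (y ^ 2 / 4) * y ^ (1 - 2 * eps n) * μ y) atTop (𝓝 C) := by
  have hIoi : ∀ᶠ y in atTop, y ∈ Ioi a := eventually_gt_atTop a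
  have hderiv : ContDiffOn ℝ 1 (deriv μ) (Ioi a) := hμ.deriv_of_isOpen isOpen_Ioi (by norm_num)
  have hasDerivAt_of_contDiffOn {f : ℝ → ℝ} {k : WithTop ℕ∞} (hk : k ≠ 0)
      (hf : ContDiffOn ℝ k f (Ioi a)) : ∀ᶠ y in atTop, HasDerivAt f (deriv f y) y :=
    hIoi.mono fun y hy =>
      ((hf.differentiableOn hk).differentiableAt (Ioi_mem_nhds hy)).hasDerivAt
  have hpotential := tendsto_sq_mul_diffusive_potential hn hdecay
  have heps := eps_pos hn
  simpa only [driftWeight, neg_sub] using exists_tendsto_driftWeight_mul_of_linear (ε := eps n)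
    (K := 1) (q := fun y => (2 * mu1 y) ^ n * μ y ^ (n - 1)) (hIoi.mono hpos)
    (hasDerivAt_of_contDiffOn two_ne_zero hμ) (hasDerivAt_of_contDiffOn one_ne_zero hderiv)
    (hIoi.mono fun y hy => by
      rw [hode y hy, mul_pow, mul_assoc, pow_sub_one_mul (by lia)])
    (hpotential.eventually_const_le (by norm_num))
    (hpotential.eventually_le_const (by positivity)) hdecay

end DiffusiveProfile

/-- Gaussian decay of the diffusive profile at infinity: there is C > 0 with
e^{y²/4} y^{1−2ε} μ₂(y) → C as y → ∞. -/
theorem diffusive_profile_gaussian_decay (n : ℕ) (hn : 4 ≤ n)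
    (μ : ℝ → ℝ) (hμ : IsDiffusiveProfile n μ) :
    ∃ C : ℝ, 0 < C ∧
      Filter.Tendsto (fun y : ℝ => Real.exp (y ^ 2 / 4) * y ^ (1 - 2 * eps n) * μ y)
        Filter.atTop (nhds C) :=
  diffusive_profile_gaussian_decay_general (by lia) hμ.1 hμ.2.1 hμ.2.2.1 hμ.2.2.2.2
end

section
/- For every integer n ≥ 4 there exists a unique function h : [0,∞) → ℝ that is twice continuously differentiable and satisfies h''(z) + γ η(z) + α z η'(z) = n (2κ z η(z) + η(z)²)^{n−1} ((2κ z + 2η(z)) h(z) + 2κ₃ z³ η(z)) for all z ≥ 0, h'(0) = 0, and h(z) − λ₀ z^{2−δ} → 0 as z → ∞. -/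
noncomputable def kap3 : ℝ := -kap / 12

noncomputable def gam (n : ℕ) : ℝ := 1 / (2 * (n : ℝ) + 1)

noncomputable def alph (n : ℕ) : ℝ := 1 / 2 - gam n

noncomputable def lam0 (n : ℕ) : ℝ :=
  (lam n / (2 * kap)) *
    (-2 * (n : ℝ) * kap3 * del n * (del n + 1) - kap * (del n - 2 * eps n)) /
    (((n : ℝ) - 1) * del n * (del n + 1) + 2 * (2 * del n - 1))

def IsReactiveProfile (n : ℕ) (η : ℝ → ℝ) : Prop :=
  ContDiffOn ℝ 2 η (Set.Ici 0) ∧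
  (∀ z ∈ Set.Ici (0:ℝ), 0 < η z) ∧
  (∀ z ∈ Set.Ici (0:ℝ),
    derivWithin (derivWithin η (Set.Ici 0)) (Set.Ici 0) z
      = (2 * kap * z * η z + (η z) ^ 2) ^ n) ∧
  derivWithin η (Set.Ici 0) 0 = -kap ∧
  Filter.Tendsto η Filter.atTop (nhds 0)

/-- The corrector h: C² on [0,∞), satisfies
h'' + γη + αzη' = n(2κzη+η²)^{n−1}((2κz+2η)h + 2κ₃z³η), h'(0) = 0,
h(z) − λ₀ z^{2−δ} → 0 as z → ∞. -/
def IsCorrector (n : ℕ) (η h : ℝ → ℝ) : Prop :=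
  ContDiffOn ℝ 2 h (Set.Ici 0) ∧
  (∀ z ∈ Set.Ici (0:ℝ),
    derivWithin (derivWithin h (Set.Ici 0)) (Set.Ici 0) z + gam n * η z
        + alph n * z * derivWithin η (Set.Ici 0) z
      = (n : ℝ) * (2 * kap * z * η z + (η z) ^ 2) ^ (n - 1)
          * ((2 * kap * z + 2 * η z) * h z + 2 * kap3 * z ^ 3 * η z)) ∧
  derivWithin h (Set.Ici 0) 0 = 0 ∧
  Filter.Tendsto (fun z : ℝ => h z - lam0 n * z ^ (2 - del n)) Filter.atTop (nhds 0)

/-!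
Comparison with `l z ^ (-δ)` from above and with a shifted copy `l (z + a) ^ (-δ)` from below, both
exact solutions of `y'' = (2 κ z y) ^ n`, gives `η = l z ^ (-δ) + O(z ^ (-δ - 1))`. The corrector
equation is `h'' = q h + r` with `q > 0` comparable to `z ^ (-2)`. Two correctors differ by a
solution `d` of `d'' = q d` with `d' 0 = 0`; then `d ^ 2` is nondecreasing and tends to `0`, so
`d = 0`. For existence, subtracting an explicit approximate corrector leaves `v'' = q v + G` with
`G = O(z ^ (-1 - δ))`. As `δ > 1`, multiples of `(z + 1) ^ (-s)` with small `s > 0` are barriers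
for this equation, and shooting on `v 0` gives a solution that stays between them and thus decays.
-/

open Filter Topology Set Asymptotics
open scoped NNReal BoundedContinuousFunction

section GlobalPicard

/-- The weight `exp (∫ a)` of Bielecki's norm, in which the Picard operator of a globally Lipschitz
field is a contraction on the whole half-line. -/
noncomputable def bieleckiWeight (a : ℝ → ℝ) (t₀ t : ℝ) : ℝ :=
  Real.exp (∫ s in t₀..t, a s)

variable {a : ℝ → ℝ} {t₀ t : ℝ}

theorem bieleckiWeight_pos : 0 < bieleckiWeight a t₀ t :=
  Real.exp_pos _

theorem one_le_bieleckiWeight (ha : ∀ s, 0 ≤ a s) (ht : t₀ ≤ t) : 1 ≤ bieleckiWeight a t₀ t :=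
  Real.one_le_exp (intervalIntegral.integral_nonneg ht fun s _ => ha s)

theorem hasDerivAt_bieleckiWeight (ha : Continuous a) :
    HasDerivAt (bieleckiWeight a t₀) (bieleckiWeight a t₀ t * a t) t :=
  (ha.integral_hasStrictDerivAt t₀ t).hasDerivAt.exp

theorem continuous_bieleckiWeight (ha : Continuous a) : Continuous (bieleckiWeight a t₀) :=
  continuous_iff_continuousAt.2 fun _ => (hasDerivAt_bieleckiWeight ha).continuousAt

variable {E : Type*} [NormedAddCommGroup E] [NormedSpace ℝ E]

theorem norm_integral_le_mul_bieleckiWeight (ha : Continuous a) {φ : ℝ → E} {c : ℝ}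
    (hc : 0 ≤ c) (ht : t₀ ≤ t)
    (hφ : ∀ s ∈ Ioc t₀ t, ‖φ s‖ ≤ c * (bieleckiWeight a t₀ s * a s)) :
    ‖∫ s in t₀..t, φ s‖ ≤ c * bieleckiWeight a t₀ t := by
  have hint : IntervalIntegrable (fun s => bieleckiWeight a t₀ s * a s) MeasureTheory.volume t₀ t :=
    ((continuous_bieleckiWeight ha).mul ha).intervalIntegrable _ _
  calc ‖∫ s in t₀..t, φ s‖ ≤ ∫ s in t₀..t, c * (bieleckiWeight a t₀ s * a s) :=
        intervalIntegral.norm_integral_le_of_norm_le ht (.of_forall hφ) (hint.const_mul c)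
    _ = c * (bieleckiWeight a t₀ t - bieleckiWeight a t₀ t₀) := by
        rw [intervalIntegral.integral_const_mul, intervalIntegral.integral_eq_sub_of_hasDerivAt
          (fun s _ => hasDerivAt_bieleckiWeight ha) hint]
    _ ≤ c * bieleckiWeight a t₀ t := by
        gcongr
        exact sub_le_self _ bieleckiWeight_pos.le

/-- The Picard operator `u ↦ x₀ + ∫ F s (u s)` conjugated by a weight: in terms of `w = W⁻¹ • u` it
acts on bounded functions. Its values are frozen to the left of `t₀`. -/
noncomputable def weightedPicard (W : ℝ → ℝ) (F : ℝ → E → E) (t₀ : ℝ) (x₀ : E) (w : ℝ → E)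
    (t : ℝ) : E :=
  (W (max t₀ t))⁻¹ • (x₀ + ∫ s in t₀..max t₀ t, F s (W s • w s))

variable {F : ℝ → E → E} {K : ℝ → ℝ≥0} {x₀ : E}

theorem continuous_weightedPicard {W : ℝ → ℝ} (hW : Continuous W) (hW0 : ∀ t, W t ≠ 0)
    (hF : Continuous (Function.uncurry F)) {w : ℝ → E} (hw : Continuous w) :
    Continuous (weightedPicard W F t₀ x₀ w) := by
  have hΦ : Continuous fun s => F s (W s • w s) := hF.comp (continuous_id.prodMk (hW.smul hw))
  have hm : Continuous fun t => max t₀ t := continuous_const.max continuous_id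
  exact ((hW.comp hm).inv₀ fun t => hW0 _).smul
    (continuous_const.add ((intervalIntegral.continuous_primitive
      (fun _ _ => hΦ.intervalIntegrable _ _) t₀).comp hm))

theorem norm_weightedPicard_le (hK : Continuous K) (hF : Continuous (Function.uncurry F))
    (hFK : ∀ t, LipschitzWith (K t) (F t)) (w : ℝ →ᵇ E) :
    ‖weightedPicard (bieleckiWeight (fun s => 2 * K s + ‖F s 0‖) t₀) F t₀ x₀ w t‖
      ≤ ‖x₀‖ + (1 + ‖w‖) := by
  set a : ℝ → ℝ := fun s => 2 * K s + ‖F s 0‖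
  have ha : Continuous a := by fun_prop
  set T := max t₀ t
  have hT : t₀ ≤ T := le_max_left _ _
  set W := bieleckiWeight a t₀
  have hW1 {s : ℝ} (hs : t₀ ≤ s) : 1 ≤ W s := one_le_bieleckiWeight (fun s => by positivity) hs
  have hΦ : ∀ s ∈ Ioc t₀ T, ‖F s (W s • w s)‖ ≤ (1 + ‖w‖) * (W s * a s) := fun s hs => by
    have hWs := hW1 hs.1.le
    calc ‖F s (W s • w s)‖ ≤ ‖F s (W s • w s) - F s 0‖ + ‖F s 0‖ := norm_le_norm_sub_add _ _
      _ ≤ K s * (W s * ‖w s‖) + ‖F s 0‖ := by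
          gcongr
          simpa [norm_smul, abs_of_pos (zero_lt_one.trans_le hWs)]
            using (hFK s).norm_sub_le (W s • w s) 0
      _ ≤ a s * (W s * ‖w‖) + W s * a s := by
          have := w.norm_coe_le_norm s
          gcongr
          · exact le_add_of_le_of_nonneg (by linarith [(K s).2]) (norm_nonneg _)
          · exact (le_add_of_nonneg_left (by positivity)).trans
              (le_mul_of_one_le_left (by positivity) hWs)
      _ = (1 + ‖w‖) * (W s * a s) := by ring
  have hWT : 0 < W T := bieleckiWeight_pos
  rw [weightedPicard, norm_smul, norm_inv, Real.norm_of_nonneg hWT.le, inv_mul_le_iff₀ hWT]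
  calc _ ≤ ‖x₀‖ + ‖∫ s in t₀..T, F s (W s • w s)‖ := norm_add_le _ _
    _ ≤ W T * ‖x₀‖ + (1 + ‖w‖) * W T := by
        gcongr
        · exact le_mul_of_one_le_left (norm_nonneg _) (hW1 hT)
        · exact norm_integral_le_mul_bieleckiWeight ha (by positivity) hT hΦ
    _ = W T * (‖x₀‖ + (1 + ‖w‖)) := by ring

theorem dist_weightedPicard_le (hK : Continuous K) (hF : Continuous (Function.uncurry F))
    (hFK : ∀ t, LipschitzWith (K t) (F t)) (w w' : ℝ →ᵇ E) :
    dist (weightedPicard (bieleckiWeight (fun s => 2 * K s + ‖F s 0‖) t₀) F t₀ x₀ w t)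
      (weightedPicard (bieleckiWeight (fun s => 2 * K s + ‖F s 0‖) t₀) F t₀ x₀ w' t)
      ≤ dist w w' / 2 := by
  set a : ℝ → ℝ := fun s => 2 * K s + ‖F s 0‖
  have ha : Continuous a := by fun_prop
  set W := bieleckiWeight a t₀
  have hW : Continuous W := continuous_bieleckiWeight ha
  have hWpos (s : ℝ) : 0 < W s := bieleckiWeight_pos
  have hint (w : ℝ →ᵇ E) (T : ℝ) :
      IntervalIntegrable (fun s => F s (W s • w s)) MeasureTheory.volume t₀ T :=
    (hF.comp (continuous_id.prodMk (hW.smul w.continuous))).intervalIntegrable _ _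
  have hΦ (s : ℝ) :
      ‖F s (W s • w s) - F s (W s • w' s)‖ ≤ dist w w' / 2 * (W s * a s) := by
    calc _ ≤ K s * (W s * dist (w s) (w' s)) := by
          simpa [← smul_sub, norm_smul, abs_of_pos (hWpos s), dist_eq_norm]
            using (hFK s).norm_sub_le (W s • w s) (W s • w' s)
      _ ≤ (a s / 2) * (W s * dist w w') := by
          have := (hWpos s).le
          gcongr
          · simp only [a]
            linarith [norm_nonneg (F s 0)]
          · exact BoundedContinuousFunction.dist_coe_le_dist s
      _ = dist w w' / 2 * (W s * a s) := by ring
  rw [dist_eq_norm, weightedPicard, weightedPicard, ← smul_sub, add_sub_add_left_eq_sub,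
    ← intervalIntegral.integral_sub (hint _ _) (hint _ _), norm_smul, norm_inv,
    Real.norm_of_nonneg (hWpos _).le, inv_mul_le_iff₀ (hWpos _), mul_comm (W _)]
  exact norm_integral_le_mul_bieleckiWeight ha (by positivity) (le_max_left _ _) fun s _ => hΦ s

theorem exists_eq_weightedPicard [CompleteSpace E] (hK : Continuous K)
    (hF : Continuous (Function.uncurry F)) (hFK : ∀ t, LipschitzWith (K t) (F t))
    (t₀ : ℝ) (x₀ : E) :
    ∃ w : ℝ →ᵇ E,
      w = weightedPicard (bieleckiWeight (fun s => 2 * K s + ‖F s 0‖) t₀) F t₀ x₀ w := by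
  have ha : Continuous fun s => 2 * (K s : ℝ) + ‖F s 0‖ := by fun_prop
  let Ψ (w : ℝ →ᵇ E) : ℝ →ᵇ E := .ofNormedAddCommGroup
    (weightedPicard (bieleckiWeight (fun s => 2 * K s + ‖F s 0‖) t₀) F t₀ x₀ w)
    (continuous_weightedPicard (continuous_bieleckiWeight ha)
      (fun _ => bieleckiWeight_pos.ne') hF w.continuous)
    (‖x₀‖ + (1 + ‖w‖)) fun _ => norm_weightedPicard_le hK hF hFK w
  have hΨ : ContractingWith (1 / 2) Ψ := by
    refine ⟨by rw [← NNReal.coe_lt_coe]; norm_num, LipschitzWith.of_dist_le_mul fun w w' => ?_⟩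
    refine (BoundedContinuousFunction.dist_le (by positivity)).2 fun t => ?_
    refine (dist_weightedPicard_le hK hF hFK w w').trans_eq ?_
    simp [div_eq_inv_mul]
  exact ⟨_, congrArg DFunLike.coe hΨ.fixedPoint_isFixedPt.symm⟩

theorem exists_forall_hasDerivWithinAt_Ici_of_lipschitzWith [CompleteSpace E] (hK : Continuous K)
    (hF : Continuous (Function.uncurry F)) (hFK : ∀ t, LipschitzWith (K t) (F t))
    (t₀ : ℝ) (x₀ : E) :
    ∃ u : ℝ → E, u t₀ = x₀ ∧ ∀ t ∈ Ici t₀, HasDerivWithinAt u (F t (u t)) (Ici t₀) t := by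
  obtain ⟨w, hw⟩ := exists_eq_weightedPicard hK hF hFK t₀ x₀
  set W := bieleckiWeight (fun s => 2 * K s + ‖F s 0‖) t₀
  have hW : Continuous W := continuous_bieleckiWeight (by fun_prop)
  have hΦ : Continuous fun s => F s (W s • w s) :=
    hF.comp (continuous_id.prodMk (hW.smul w.continuous))
  have hu : ∀ t ∈ Ici t₀, W t • w t = x₀ + ∫ s in t₀..t, F s (W s • w s) := fun t ht => by
    have hWt : W t ≠ 0 := bieleckiWeight_pos.ne'
    conv_lhs => rw [hw]
    rw [weightedPicard, max_eq_right ht, smul_inv_smul₀ hWt]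
  refine ⟨fun t => W t • w t, by simp [hu t₀ self_mem_Ici], fun t ht => ?_⟩
  exact ((hΦ.integral_hasStrictDerivAt t₀ t).hasDerivAt.const_add x₀).hasDerivWithinAt.congr
    hu (hu t ht)

end GlobalPicard

/-- `f'` and `f''` are the successive derivatives of `f` along `s`. -/
structure HasTwoDerivsOn (f f' f'' : ℝ → ℝ) (s : Set ℝ) : Prop where
  hasDerivWithinAt : ∀ x ∈ s, HasDerivWithinAt f (f' x) s x
  hasDerivWithinAt_deriv : ∀ x ∈ s, HasDerivWithinAt f' (f'' x) s x

theorem hasTwoDerivsOn_rpow_add {a : ℝ} (p : ℝ) {s : Set ℝ} (hs : ∀ z ∈ s, 0 < z + a) :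
    HasTwoDerivsOn (fun z => (z + a) ^ p) (fun z => p * (z + a) ^ (p - 1))
      (fun z => p * (p - 1) * (z + a) ^ (p - 2)) s := by
  have hrpow (r z : ℝ) (hz : z ∈ s) :
      HasDerivWithinAt (fun z => (z + a) ^ r) (r * (z + a) ^ (r - 1)) s z := by
    simpa using ((hasDerivAt_id z).add_const a).rpow_const (p := r) (.inl (hs z hz).ne')
      |>.hasDerivWithinAt
  refine ⟨hrpow p, fun z hz => ((hrpow (p - 1) z hz).const_mul p).congr_deriv ?_⟩
  ring_nf

theorem hasTwoDerivsOn_sq (s : Set ℝ) :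
    HasTwoDerivsOn (fun z : ℝ => z ^ 2) (fun z => 2 * z) (fun _ => 2) s :=
  ⟨fun z _ => by simpa using (hasDerivAt_pow 2 z).hasDerivWithinAt,
    fun z _ => by simpa using ((hasDerivAt_id z).const_mul 2).hasDerivWithinAt⟩

namespace HasTwoDerivsOn

variable {f f' f'' g g' g'' : ℝ → ℝ} {s t : Set ℝ} {a b c x : ℝ}

theorem continuousOn (hf : HasTwoDerivsOn f f' f'' s) : ContinuousOn f s :=
  fun x hx => (hf.hasDerivWithinAt x hx).continuousWithinAt

theorem mono (hf : HasTwoDerivsOn f f' f'' s) (hts : t ⊆ s) : HasTwoDerivsOn f f' f'' t :=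
  ⟨fun x hx => (hf.hasDerivWithinAt x (hts hx)).mono hts,
    fun x hx => (hf.hasDerivWithinAt_deriv x (hts hx)).mono hts⟩

theorem congr_deriv (hf : HasTwoDerivsOn f f' f'' s) (h : EqOn f'' g'' s) :
    HasTwoDerivsOn f f' g'' s :=
  ⟨hf.hasDerivWithinAt, fun x hx => (hf.hasDerivWithinAt_deriv x hx).congr_deriv (h hx)⟩

theorem add (hf : HasTwoDerivsOn f f' f'' s) (hg : HasTwoDerivsOn g g' g'' s) :
    HasTwoDerivsOn (fun x => f x + g x) (fun x => f' x + g' x) (fun x => f'' x + g'' x) s :=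
  ⟨fun x hx => (hf.hasDerivWithinAt x hx).add (hg.hasDerivWithinAt x hx),
    fun x hx => (hf.hasDerivWithinAt_deriv x hx).add (hg.hasDerivWithinAt_deriv x hx)⟩

theorem sub (hf : HasTwoDerivsOn f f' f'' s) (hg : HasTwoDerivsOn g g' g'' s) :
    HasTwoDerivsOn (fun x => f x - g x) (fun x => f' x - g' x) (fun x => f'' x - g'' x) s :=
  ⟨fun x hx => (hf.hasDerivWithinAt x hx).sub (hg.hasDerivWithinAt x hx),
    fun x hx => (hf.hasDerivWithinAt_deriv x hx).sub (hg.hasDerivWithinAt_deriv x hx)⟩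

theorem const_mul (hf : HasTwoDerivsOn f f' f'' s) (c : ℝ) :
    HasTwoDerivsOn (fun x => c * f x) (fun x => c * f' x) (fun x => c * f'' x) s :=
  ⟨fun x hx => (hf.hasDerivWithinAt x hx).const_mul c,
    fun x hx => (hf.hasDerivWithinAt_deriv x hx).const_mul c⟩

theorem mul (hf : HasTwoDerivsOn f f' f'' s) (hg : HasTwoDerivsOn g g' g'' s) :
    HasTwoDerivsOn (fun x => f x * g x) (fun x => f' x * g x + f x * g' x)
      (fun x => f'' x * g x + 2 * (f' x * g' x) + f x * g'' x) s := by
  refine ⟨fun x hx => (hf.hasDerivWithinAt x hx).mul (hg.hasDerivWithinAt x hx), fun x hx =>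
    (((hf.hasDerivWithinAt_deriv x hx).mul (hg.hasDerivWithinAt x hx)).add
      ((hf.hasDerivWithinAt x hx).mul (hg.hasDerivWithinAt_deriv x hx))).congr_deriv ?_⟩
  ring

theorem of_contDiffOn (hf : ContDiffOn ℝ 2 f s) (hs : UniqueDiffOn ℝ s) :
    HasTwoDerivsOn f (derivWithin f s) (derivWithin (derivWithin f s) s) s := by
  obtain ⟨hd, -, hd'⟩ := (contDiffOn_succ_iff_derivWithin hs).1
    (show ContDiffOn ℝ (1 + 1) f s from hf)
  exact ⟨fun x hx => (hd x hx).hasDerivWithinAt,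
    fun x hx => (hd'.differentiableOn one_ne_zero x hx).hasDerivWithinAt⟩

theorem derivWithin_eqOn (hf : HasTwoDerivsOn f f' f'' s) (hs : UniqueDiffOn ℝ s) :
    EqOn (derivWithin f s) f' s :=
  fun x hx => (hf.hasDerivWithinAt x hx).derivWithin (hs x hx)

theorem derivWithin_derivWithin_eqOn (hf : HasTwoDerivsOn f f' f'' s) (hs : UniqueDiffOn ℝ s) :
    EqOn (derivWithin (derivWithin f s) s) f'' s := fun x hx => by
  rw [derivWithin_congr (hf.derivWithin_eqOn hs) (hf.derivWithin_eqOn hs hx)]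
  exact (hf.hasDerivWithinAt_deriv x hx).derivWithin (hs x hx)

theorem contDiffOn (hf : HasTwoDerivsOn f f' f'' s) (hs : UniqueDiffOn ℝ s)
    (hf'' : ContinuousOn f'' s) : ContDiffOn ℝ 2 f s := by
  have hf' : ContDiffOn ℝ 1 f' s := by
    rw [show (1 : WithTop ℕ∞) = 0 + 1 from rfl, contDiffOn_succ_iff_derivWithin hs]
    refine ⟨fun x hx => (hf.hasDerivWithinAt_deriv x hx).differentiableWithinAt, by simp,
      contDiffOn_zero.2 (hf''.congr fun x hx => ?_)⟩
    exact (hf.hasDerivWithinAt_deriv x hx).derivWithin (hs x hx)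
  rw [show (2 : WithTop ℕ∞) = 1 + 1 from rfl, contDiffOn_succ_iff_derivWithin hs]
  exact ⟨fun x hx => (hf.hasDerivWithinAt x hx).differentiableWithinAt, by simp,
    hf'.congr (hf.derivWithin_eqOn hs)⟩

theorem nonneg_of_isLocalMin (hf : HasTwoDerivsOn f f' f'' s) (hs : s ∈ 𝓝 x)
    (hmin : IsLocalMin f x) : 0 ≤ f'' x := by
  have hderiv : deriv f =ᶠ[𝓝 x] f' := by
    filter_upwards [eventually_mem_nhds_iff.2 hs] with y hy
    exact ((hf.hasDerivWithinAt y (mem_of_mem_nhds hy)).hasDerivAt hy).deriv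
  have hderiv2 : deriv (deriv f) x = f'' x := by
    rw [hderiv.deriv_eq]
    exact ((hf.hasDerivWithinAt_deriv x (mem_of_mem_nhds hs)).hasDerivAt hs).deriv
  by_contra! hneg
  have hmax : IsLocalMax f x := isLocalMax_of_deriv_deriv_neg (by rwa [hderiv2])
    hmin.deriv_eq_zero (hf.continuousOn.continuousAt hs)
  have hconst : f =ᶠ[𝓝 x] fun _ => f x := by
    filter_upwards [hmin, hmax] with y h₁ h₂ using le_antisymm h₂ h₁
  have : f'' x = 0 := by simp [← hderiv2, hconst.deriv.deriv_eq]
  exact hneg.ne this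

theorem nonneg_on_Icc (hf : HasTwoDerivsOn f f' f'' (Icc a b)) (ha : f' a < 0) (hb : 0 ≤ f b)
    (h : ∀ x ∈ Ioo a b, f x < 0 → f'' x < 0) : ∀ x ∈ Icc a b, 0 ≤ f x := by
  intro y hy
  obtain ⟨x, hx, hmin⟩ := isCompact_Icc.exists_isMinOn ⟨y, hy⟩ hf.continuousOn
  refine le_trans ?_ (hmin hy)
  by_contra! hneg
  have hxb : x < b := hx.2.lt_of_ne fun hxb => hneg.not_ge (hxb ▸ hb)
  obtain rfl | hax := hx.1.eq_or_lt
  · have hcone : (1 : ℝ) ∈ posTangentConeAt (Icc a b) a :=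
      one_mem_posTangentConeAt_iff_frequently.2 (Eventually.frequently (Icc_mem_nhdsGT hxb))
    have := hmin.localize.hasFDerivWithinAt_nonneg (hf.hasDerivWithinAt a hx) hcone
    exact this.not_gt (by simpa using ha)
  · have hnhds : Icc a b ∈ 𝓝 x := Icc_mem_nhds hax hxb
    exact (h x ⟨hax, hxb⟩ hneg).not_ge (hf.nonneg_of_isLocalMin hnhds (hmin.isLocalMin hnhds))

theorem nonneg_on_Ici (hf : HasTwoDerivsOn f f' f'' (Ici a)) (ha : 0 ≤ f a)
    (hlim : Tendsto f atTop (𝓝 0)) (h : ∀ x ∈ Ioi a, f x < 0 → f'' x < 0) :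
    ∀ x ∈ Ici a, 0 ≤ f x := by
  intro y hy
  by_contra! hneg
  have hfar : ∀ᶠ x in cocompact ℝ ⊓ 𝓟 (Ici a), f y ≤ f x := by
    rw [cocompact_eq_atBot_atTop, inf_sup_right, (disjoint_atBot_principal_Ici a).eq_bot,
      bot_sup_eq]
    exact ((hlim.eventually_const_lt hneg).mono fun _ => le_of_lt).filter_mono inf_le_left
  obtain ⟨x, hx, hmin⟩ := hf.continuousOn.exists_isMinOn' isClosed_Ici hy hfar
  have hxneg : f x < 0 := (hmin hy).trans_lt hneg
  have hax : a < x := lt_of_le_of_ne hx fun hax => hxneg.not_ge (hax ▸ ha)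
  exact (h x hax hxneg).not_ge
    (hf.nonneg_of_isLocalMin (Ici_mem_nhds hax) (hmin.isLocalMin (Ici_mem_nhds hax)))

end HasTwoDerivsOn

section LinearEquation

variable {q g B B' B'' : ℝ → ℝ} {a b : ℝ}

theorem exists_hasTwoDerivsOn_Ici_linear (hq : ContinuousOn q (Ici a)) (hg : ContinuousOn g (Ici a))
    (x₀ y₀ : ℝ) :
    ∃ v v' : ℝ → ℝ, HasTwoDerivsOn v v' (fun z => q z * v z + g z) (Ici a) ∧
      v a = x₀ ∧ v' a = y₀ := by
  have hmax : Continuous fun t => max a t := continuous_const.max continuous_id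
  have hQ : Continuous fun t => q (max a t) := hq.comp_continuous hmax fun t => le_max_left a t
  have hG : Continuous fun t => g (max a t) := hg.comp_continuous hmax fun t => le_max_left a t
  let F (t : ℝ) (p : ℝ × ℝ) : ℝ × ℝ := (p.2, q (max a t) * p.1 + g (max a t))
  have hF : Continuous (Function.uncurry F) := by
    have hQ' := hQ.comp (continuous_fst (X := ℝ) (Y := ℝ × ℝ))
    have hG' := hG.comp (continuous_fst (X := ℝ) (Y := ℝ × ℝ))
    exact continuous_snd.snd.prodMk ((hQ'.mul continuous_snd.fst).add hG')
  have hFK (t : ℝ) : LipschitzWith (max 1 ‖q (max a t)‖₊) (F t) :=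
    LipschitzWith.prod_snd.prodMk (LipschitzWith.of_dist_le_mul fun x y => by
      rw [dist_add_right, Real.dist_eq, ← mul_sub, abs_mul]
      exact mul_le_mul_of_nonneg_left (le_max_left _ _) (abs_nonneg _))
  obtain ⟨u, hu₀, hu⟩ := exists_forall_hasDerivWithinAt_Ici_of_lipschitzWith
    (continuous_const.max hQ.nnnorm) hF hFK a (x₀, y₀)
  refine ⟨fun t => (u t).1, fun t => (u t).2, ⟨fun t ht => ?_, fun t ht => ?_⟩, ?_, ?_⟩
  · exact (hu t ht).fst
  · have : HasDerivWithinAt (fun t => (u t).2) (F t (u t)).2 (Ici a) t := (hu t ht).snd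
    simpa only [F, max_eq_right (mem_Ici.1 ht)] using this
  · simp [hu₀]
  · simp [hu₀]

namespace HasTwoDerivsOn

variable {u u' u'' w w' w'' : ℝ → ℝ}

theorem monotoneOn_sq_of_linear (hu : HasTwoDerivsOn u u' (fun z => q z * u z) (Ici a))
    (hq : ∀ z ∈ Ici a, 0 ≤ q z) (ha : u' a = 0) : MonotoneOn (fun z => u z ^ 2) (Ici a) := by
  have monotoneOn_of_deriv {f f' : ℝ → ℝ} (hf : ∀ z ∈ Ici a, HasDerivWithinAt f (f' z) (Ici a) z)
      (hf' : ∀ z ∈ Ici a, 0 ≤ f' z) : MonotoneOn f (Ici a) :=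
    monotoneOn_of_hasDerivWithinAt_nonneg (convex_Ici a)
      (fun z hz => (hf z hz).continuousWithinAt)
      (fun z hz => (hf z (interior_subset hz)).mono interior_subset)
      fun z hz => hf' z (interior_subset hz)
  have hmul : MonotoneOn (fun z => u z * u' z) (Ici a) :=
    monotoneOn_of_deriv
      (fun z hz => (hu.hasDerivWithinAt z hz).mul (hu.hasDerivWithinAt_deriv z hz))
      fun z hz => by nlinarith [mul_nonneg (hq z hz) (sq_nonneg (u z)), sq_nonneg (u' z)]
  refine monotoneOn_of_deriv (fun z hz => (hu.hasDerivWithinAt z hz).pow 2) fun z hz => ?_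
  have : 0 ≤ u z * u' z := by simpa [ha] using hmul self_mem_Ici hz hz
  simpa [mul_assoc] using this

theorem eqOn_zero_of_linear (hu : HasTwoDerivsOn u u' (fun z => q z * u z) (Ici a))
    (hq : ∀ z ∈ Ici a, 0 ≤ q z) (ha : u' a = 0) (hlim : Tendsto u atTop (𝓝 0)) :
    EqOn u 0 (Ici a) := fun z hz => by
  have hle : u z ^ 2 ≤ 0 := by
    refine ge_of_tendsto (by simpa using hlim.pow 2) ?_
    filter_upwards [eventually_ge_atTop z] with y hy
    exact hu.monotoneOn_sq_of_linear hq ha hz (hz.trans hy) hy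
  exact pow_eq_zero_iff two_ne_zero |>.1 (le_antisymm hle (sq_nonneg _))

theorem le_of_subsolution_of_supersolution (hu : HasTwoDerivsOn u u' u'' (Icc a b))
    (hw : HasTwoDerivsOn w w' w'' (Icc a b)) (hq : ∀ z ∈ Ioo a b, 0 < q z)
    (hsub : ∀ z ∈ Ioo a b, q z * u z + g z ≤ u'' z)
    (hsuper : ∀ z ∈ Ioo a b, w'' z ≤ q z * w z + g z)
    (ha : w' a < u' a) (hb : u b ≤ w b) : ∀ z ∈ Icc a b, u z ≤ w z := fun z hz => by
  refine sub_nonneg.1 ((hw.sub hu).nonneg_on_Icc (sub_neg.2 ha) (sub_nonneg.2 hb) ?_ z hz)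
  intro x hx hneg
  nlinarith [hsub x hx, hsuper x hx, mul_neg_of_pos_of_neg (hq x hx) hneg]

theorem abs_le_of_barrier (hu : HasTwoDerivsOn u u' (fun z => q z * u z + g z) (Icc a b))
    (hB : HasTwoDerivsOn B B' B'' (Icc a b)) (hq : ∀ z ∈ Ioo a b, 0 < q z)
    (hbar : ∀ z ∈ Ioo a b, B'' z + |g z| ≤ q z * B z)
    (ha : |u' a| < -B' a) (hb : |u b| ≤ B b) : ∀ z ∈ Icc a b, |u z| ≤ B z := by
  have hlower := (hB.const_mul (-1)).le_of_subsolution_of_supersolution (g := g) hu hq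
    (fun z hz => by linarith [hbar z hz, neg_abs_le (g z), le_abs_self (g z)]) (fun z _ => le_rfl)
    (by linarith [le_abs_self (u' a)]) (by linarith [neg_abs_le (u b)])
  have hupper := hu.le_of_subsolution_of_supersolution (g := g) hB hq (fun z _ => le_rfl)
    (fun z hz => by linarith [hbar z hz, neg_abs_le (g z)])
    (by linarith [neg_abs_le (u' a)]) (by linarith [le_abs_self (u b)])
  exact fun z hz => abs_le.2 ⟨by linarith [hlower z hz], hupper z hz⟩

end HasTwoDerivsOn

theorem exists_hasTwoDerivsOn_Ici_abs_le_barrier (hqc : ContinuousOn q (Ici a))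
    (hgc : ContinuousOn g (Ici a)) (hq : ∀ z ∈ Ici a, 0 < q z)
    (hB : HasTwoDerivsOn B B' B'' (Ici a)) (hB₀ : ∀ z ∈ Ici a, 0 ≤ B z)
    (hbar : ∀ z ∈ Ici a, B'' z + |g z| ≤ q z * B z) (hb : |b| < -B' a) :
    ∃ v v' : ℝ → ℝ, HasTwoDerivsOn v v' (fun z => q z * v z + g z) (Ici a) ∧
      v' a = b ∧ ∀ z ∈ Ici a, |v z| ≤ B z := by
  obtain ⟨u, u', hu, hua, hu'a⟩ := exists_hasTwoDerivsOn_Ici_linear hqc hgc 0 b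
  obtain ⟨w, w', hw, hwa, hw'a⟩ := exists_hasTwoDerivsOn_Ici_linear (g := 0) hqc
    continuousOn_const 1 0
  have hv (c : ℝ) : HasTwoDerivsOn (fun z => u z + c * w z) (fun z => u' z + c * w' z)
      (fun z => q z * (u z + c * w z) + g z) (Ici a) :=
    (hu.add (hw.const_mul c)).congr_deriv fun z _ => by simp only [Pi.zero_apply]; ring
  have hw₀ {z : ℝ} (hz : z ∈ Ici a) : w z ≠ 0 := by
    have hmono := HasTwoDerivsOn.monotoneOn_sq_of_linear (by simpa using hw)
      (fun z hz => (hq z hz).le) hw'a self_mem_Ici hz hz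
    exact fun h => by norm_num [hwa, h] at hmono
  -- The solutions below the barrier at `a + k` are below it on all of `[a, a + k]`: these are
  -- nested compact sets of initial values.
  let S (k : ℕ) : Set ℝ := {c | |u (a + k) + c * w (a + k)| ≤ B (a + k)}
  have hmem (k : ℕ) : a + k ∈ Ici a := mem_Ici.2 (by simp)
  have hS {k : ℕ} {c : ℝ} (hc : c ∈ S k) : ∀ z ∈ Icc a (a + k), |u z + c * w z| ≤ B z :=
    ((hv c).mono Icc_subset_Ici_self).abs_le_of_barrier (hB.mono Icc_subset_Ici_self)
      (fun z hz => hq z hz.1.le) (fun z hz => hbar z hz.1.le) (by simpa [hu'a, hw'a] using hb) hc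
  have hclosed (k : ℕ) : IsClosed (S k) := isClosed_le (by fun_prop) continuous_const
  obtain ⟨c, hc⟩ := IsCompact.nonempty_iInter_of_sequence_nonempty_isCompact_isClosed S
    (fun k c hc => hS hc _ ⟨by simp, by simp⟩)
    (fun k => ⟨-u (a + k) / w (a + k), by
      simp [S, div_mul_cancel₀ _ (hw₀ (hmem k)), hB₀ _ (hmem k)]⟩)
    ((isCompact_Icc (a := -B a) (b := B a)).of_isClosed_subset (hclosed 0) fun c hc => by
      simpa [S, hua, hwa, abs_le] using hc) hclosed
  refine ⟨_, _, hv c, by simp [hu'a, hw'a], fun z hz => ?_⟩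
  obtain ⟨k, hk⟩ := exists_nat_ge (z - a)
  exact hS (mem_iInter.1 hc k) z ⟨hz, by linarith⟩

end LinearEquation

theorem isLittleO_rpow_rpow_atTop {p q : ℝ} (h : p < q) :
    (fun z : ℝ => z ^ p) =o[atTop] fun z => z ^ q := by
  refine (isLittleO_iff_tendsto' ?_).2 ((tendsto_rpow_neg_atTop (sub_pos.2 h)).congr' ?_)
  · filter_upwards [eventually_gt_atTop 0] with z hz hzq
    exact absurd hzq (Real.rpow_pos_of_pos hz q).ne'
  · filter_upwards [eventually_gt_atTop 0] with z hz
    rw [neg_sub, Real.rpow_sub hz]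

theorem isBigO_rpow_rpow_atTop {p q : ℝ} (h : p ≤ q) :
    (fun z : ℝ => z ^ p) =O[atTop] fun z => z ^ q := by
  obtain rfl | hlt := h.eq_or_lt
  · exact isBigO_refl _ _
  · exact (isLittleO_rpow_rpow_atTop hlt).isBigO

/-- `f z = c z ^ p + O(z ^ (p - 1))` as `z → ∞`; the coefficient `c` may vanish. -/
def HasLeadingTerm (f : ℝ → ℝ) (c p : ℝ) : Prop :=
  (fun z => f z - c * z ^ p) =O[atTop] fun z => z ^ (p - 1)

theorem hasLeadingTerm_rpow (p : ℝ) : HasLeadingTerm (fun z => z ^ p) 1 p := by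
  simpa [HasLeadingTerm] using isBigO_zero _ _

theorem hasLeadingTerm_id : HasLeadingTerm (fun z => z) 1 1 := by
  simpa using hasLeadingTerm_rpow 1

theorem hasLeadingTerm_rpow_add (a p : ℝ) : HasLeadingTerm (fun z => (z + a) ^ p) 1 p := by
  have hderiv : HasDerivAt (fun x : ℝ => (1 + x) ^ p) (p * (1 + 0) ^ (p - 1)) 0 :=
    (((hasDerivAt_id (0 : ℝ)).const_add 1).rpow_const (p := p) (.inl (by simp))).congr_deriv
      (by simp)
  have hlim : Tendsto (fun z : ℝ => a / z) atTop (𝓝 0) := tendsto_const_nhds.div_atTop tendsto_id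
  have hratio : (fun z : ℝ => (1 + a / z) ^ p - 1) =O[atTop] fun z => z ^ (-1 : ℝ) := by
    refine (hderiv.isBigO_sub.comp_tendsto hlim).trans ?_ |>.congr_left fun z => by simp
    simpa [Function.comp_def, div_eq_mul_inv, Real.rpow_neg_one]
      using (isBigO_refl (fun z : ℝ => z⁻¹) atTop).const_mul_left a
  refine (IsBigO.mul_atTop_rpow_of_isBigO_rpow p (-1) (p - 1) (isBigO_refl _ _) hratio
    le_rfl).congr' ?_ .rfl
  filter_upwards [eventually_gt_atTop 0, eventually_gt_atTop (-a)] with z hz hza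
  rw [one_mul, Pi.mul_apply, mul_sub, mul_one,
    ← Real.mul_rpow hz.le (by field_simp; linarith), mul_add, mul_one, mul_div_cancel₀ _ hz.ne']

namespace HasLeadingTerm

variable {f g : ℝ → ℝ} {c d p q : ℝ}

theorem isBigO (hf : HasLeadingTerm f c p) : f =O[atTop] fun z => z ^ p := by
  simpa using (hf.trans (isBigO_rpow_rpow_atTop (by linarith))).add
    ((isBigO_refl (fun z : ℝ => z ^ p) atTop).const_mul_left c)

theorem tendsto_sub (hf : HasLeadingTerm f c p) (hp : p < 1) :
    Tendsto (fun z => f z - c * z ^ p) atTop (𝓝 0) :=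
  IsBigO.trans_tendsto hf (by simpa using tendsto_rpow_neg_atTop (sub_pos.2 hp))

theorem isBigO_of_zero (hf : HasLeadingTerm f 0 p) : f =O[atTop] fun z => z ^ (p - 1) := by
  simpa [HasLeadingTerm] using hf

theorem zero_of_le (hf : HasLeadingTerm f c q) (h : q ≤ p - 1) : HasLeadingTerm f 0 p := by
  simpa [HasLeadingTerm] using hf.isBigO.trans (isBigO_rpow_rpow_atTop h)

theorem congr (hf : HasLeadingTerm f c p) (hfg : f =ᶠ[atTop] g) (hc : c = d) (hp : p = q) :
    HasLeadingTerm g d q := by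
  subst hc hp
  exact IsBigO.congr' hf (hfg.sub .rfl) .rfl

theorem add (hf : HasLeadingTerm f c p) (hg : HasLeadingTerm g d p) :
    HasLeadingTerm (fun z => f z + g z) (c + d) p :=
  (IsBigO.add hf hg).congr_left fun z => by ring

theorem const_mul (hf : HasLeadingTerm f c p) (k : ℝ) :
    HasLeadingTerm (fun z => k * f z) (k * c) p :=
  (IsBigO.const_mul_left hf k).congr_left fun z => by ring

theorem mul (hf : HasLeadingTerm f c p) (hg : HasLeadingTerm g d q) :
    HasLeadingTerm (fun z => f z * g z) (c * d) (p + q) := by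
  have hf' := IsBigO.mul_atTop_rpow_of_isBigO_rpow (p - 1) q (p + q - 1) hf hg.isBigO (by linarith)
  have hg' := IsBigO.mul_atTop_rpow_of_isBigO_rpow p (q - 1) (p + q - 1)
    (isBigO_const_mul_self c _ _) hg (by linarith)
  refine (hf'.add hg').congr' ?_ .rfl
  filter_upwards [eventually_gt_atTop 0] with z hz
  simp only [Pi.mul_apply, Real.rpow_add hz]
  ring

theorem pow (hf : HasLeadingTerm f c p) (k : ℕ) :
    HasLeadingTerm (fun z => f z ^ k) (c ^ k) (k * p) := by
  induction k with
  | zero => simpa using hasLeadingTerm_rpow 0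
  | succ k ih => simpa [pow_succ, add_mul] using ih.mul hf

theorem isTheta (hf : HasLeadingTerm f c p) (hc : c ≠ 0) : f =Θ[atTop] fun z => z ^ p := by
  have hequiv : f ~[atTop] fun z => c * z ^ p :=
    IsBigO.trans_isLittleO hf ((isLittleO_rpow_rpow_atTop (sub_one_lt p)).const_mul_right hc)
  exact hequiv.isTheta.trans (isTheta_rfl.const_mul_left hc)

theorem squeeze (hf : HasLeadingTerm f c p) (hfg : ∀ᶠ z in atTop, f z ≤ g z)
    (hgc : ∀ᶠ z in atTop, g z ≤ c * z ^ p) : HasLeadingTerm g c p := by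
  refine IsBigO.trans (.of_bound 1 ?_) hf
  filter_upwards [hfg, hgc] with z h₁ h₂
  rw [Real.norm_of_nonpos (by linarith), Real.norm_of_nonpos (by linarith)]
  linarith

end HasLeadingTerm

section LinearDecay

variable {q g : ℝ → ℝ} {a σ : ℝ}

theorem exists_pos_forall_abs_le_mul {f : ℝ → ℝ} (hf : ContinuousOn f (Ici a))
    (hg : ContinuousOn g (Ici a)) (hpos : ∀ z ∈ Ici a, 0 < g z) (h : f =O[atTop] g) :
    ∃ C > 0, ∀ z ∈ Ici a, |f z| ≤ C * g z := by
  obtain ⟨C₁, hC₁, hfar⟩ := h.exists_pos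
  obtain ⟨N, hN⟩ := eventually_atTop.1 hfar.bound
  obtain ⟨C₂, hC₂⟩ := (isCompact_Icc (a := a) (b := N)).bddAbove_image
    ((hf.abs.div hg fun z hz => (hpos z hz).ne').mono Icc_subset_Ici_self)
  refine ⟨max C₁ C₂, lt_max_of_lt_left hC₁, fun z hz => ?_⟩
  have hgz := hpos z hz
  obtain hzN | hzN := le_total z N
  · exact (div_le_iff₀ hgz).1 ((hC₂ (mem_image_of_mem _ ⟨hz, hzN⟩)).trans (le_max_right _ _))
  · calc |f z| ≤ C₁ * g z := by simpa [abs_of_pos hgz] using hN z hzN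
      _ ≤ max C₁ C₂ * g z := by gcongr; exact le_max_left _ _

theorem mul_rpow_sub_two_add_le_mul_rpow {x s c k y₁ y₂ : ℝ} (hx : 0 < x) (hk : 0 ≤ k)
    (hs : s * (s + 1) ≤ c) (hy₁ : 2 * c * x ^ (-2 : ℝ) ≤ y₁) (hy₂ : y₂ ≤ k * c * x ^ (-s - 2)) :
    k * (-s * (-s - 1) * x ^ (-s - 2)) + y₂ ≤ y₁ * (k * x ^ (-s)) :=
  calc k * (-s * (-s - 1) * x ^ (-s - 2)) + y₂
      = k * (s * (s + 1)) * x ^ (-s - 2) + y₂ := by ring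
    _ ≤ k * c * x ^ (-s - 2) + k * c * x ^ (-s - 2) := by gcongr
    _ = 2 * c * x ^ (-2 : ℝ) * (k * x ^ (-s)) := by
        rw [show -s - 2 = -2 + -s by ring, Real.rpow_add hx]
        ring
    _ ≤ y₁ * (k * x ^ (-s)) := by gcongr

theorem exists_rpow_barrier (hqc : ContinuousOn q (Ici 0)) (hgc : ContinuousOn g (Ici 0))
    (hq : ∀ z ∈ Ici 0, 0 < q z) (hq_far : (fun z => z ^ (-2 : ℝ)) =O[atTop] q) (hσ : 0 < σ)
    (hg_far : g =O[atTop] fun z => z ^ (-2 - σ)) :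
    ∃ s > 0, ∃ k₀ : ℝ, ∀ k ≥ k₀, ∀ z ∈ Ici (0 : ℝ),
      k * (-s * (-s - 1) * (z + 1) ^ (-s - 2)) + |g z| ≤ q z * (k * (z + 1) ^ (-s)) := by
  have hpos (z : ℝ) (hz : z ∈ Ici 0) : 0 < z + 1 := by linarith [mem_Ici.1 hz]
  have hrpow (p : ℝ) : ContinuousOn (fun z : ℝ => (z + 1) ^ p) (Ici 0) :=
    (hasTwoDerivsOn_rpow_add p hpos).continuousOn
  have hshift (p : ℝ) := (hasLeadingTerm_rpow_add 1 p).isTheta one_ne_zero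
  obtain ⟨C, hC, hqC⟩ := exists_pos_forall_abs_le_mul (hrpow (-2)) hqc hq
    ((hshift _).isBigO.trans hq_far)
  obtain ⟨D, hD, hgD⟩ := exists_pos_forall_abs_le_mul hgc (hrpow (-2 - σ))
    (fun z hz => Real.rpow_pos_of_pos (hpos z hz) _) (hg_far.trans (hshift _).isBigO_symm)
  set c := 1 / (2 * C) with hc_def
  have hc : 0 < c := by positivity
  obtain ⟨s, hs, hsσ, hsc⟩ : ∃ s > 0, s ≤ σ ∧ s * (s + 1) ≤ c := by
    refine ⟨min σ (min 1 (c / 2)), by positivity, min_le_left _ _, ?_⟩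
    have h₁ : min σ (min 1 (c / 2)) ≤ 1 := (min_le_right _ _).trans (min_le_left _ _)
    have h₂ : min σ (min 1 (c / 2)) ≤ c / 2 := (min_le_right _ _).trans (min_le_right _ _)
    have h₀ : 0 < min σ (min 1 (c / 2)) := by positivity
    nlinarith
  refine ⟨s, hs, D / c, fun k hk z hz => ?_⟩
  have hk₀ : 0 ≤ k := le_trans (by positivity) hk
  refine mul_rpow_sub_two_add_le_mul_rpow (hpos z hz) hk₀ hsc ?_ ?_
  · rw [hc_def, show 2 * (1 / (2 * C)) = C⁻¹ by field_simp, inv_mul_le_iff₀ hC]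
    exact (le_abs_self _).trans (hqC z hz)
  · calc |g z| ≤ D * (z + 1) ^ (-2 - σ) := hgD z hz
      _ ≤ k * c * (z + 1) ^ (-s - 2) := by
          have : (z + 1) ^ (-2 - σ) ≤ (z + 1) ^ (-s - 2) :=
            Real.rpow_le_rpow_of_exponent_le (by linarith [mem_Ici.1 hz]) (by linarith)
          have hzσ := Real.rpow_nonneg (hpos z hz).le (-2 - σ)
          gcongr
          exact (div_le_iff₀ hc).1 hk

theorem exists_hasTwoDerivsOn_Ici_linear_tendsto_zero (hqc : ContinuousOn q (Ici 0))
    (hgc : ContinuousOn g (Ici 0)) (hq : ∀ z ∈ Ici 0, 0 < q z)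
    (hq_far : (fun z => z ^ (-2 : ℝ)) =O[atTop] q) (hσ : 0 < σ)
    (hg_far : g =O[atTop] fun z => z ^ (-2 - σ)) (b : ℝ) :
    ∃ v v' : ℝ → ℝ, HasTwoDerivsOn v v' (fun z => q z * v z + g z) (Ici 0) ∧
      v' 0 = b ∧ Tendsto v atTop (𝓝 0) := by
  obtain ⟨s, hs, k₀, hbar⟩ := exists_rpow_barrier hqc hgc hq hq_far hσ hg_far
  obtain ⟨k, hk₀, hk, hbk⟩ : ∃ k, k₀ ≤ k ∧ 0 ≤ k ∧ |b| < s * k := by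
    have hlarge : Tendsto (fun k : ℝ => s * k) atTop atTop := tendsto_id.const_mul_atTop hs
    exact ((eventually_ge_atTop k₀).and
      ((eventually_ge_atTop 0).and (hlarge.eventually_gt_atTop |b|))).exists
  have hB : HasTwoDerivsOn (fun z => k * (z + 1) ^ (-s)) _ _ (Ici 0) :=
    (hasTwoDerivsOn_rpow_add (-s) fun z hz => by linarith [mem_Ici.1 hz]).const_mul k
  obtain ⟨v, v', hv, hb, hvB⟩ := exists_hasTwoDerivsOn_Ici_abs_le_barrier hqc hgc hq hB
    (fun z hz => mul_nonneg hk (Real.rpow_nonneg (by linarith [mem_Ici.1 hz]) _)) (hbar k hk₀)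
    (by simpa [mul_comm] using hbk)
  refine ⟨v, v', hv, hb, squeeze_zero_norm' ?_ (a := fun z => k * (z + 1) ^ (-s)) ?_⟩
  · filter_upwards [eventually_ge_atTop 0] with z hz using hvB z hz
  · simpa using ((tendsto_rpow_neg_atTop hs).comp
      (tendsto_atTop_add_const_right _ 1 tendsto_id)).const_mul k

end LinearDecay

/-- The base of the nonlinearity in the profile equation `η'' = (2 κ z η + η ^ 2) ^ n`. -/
def reactionBase (κ : ℝ) (η : ℝ → ℝ) (z : ℝ) : ℝ := 2 * κ * z * η z + η z ^ 2

/-- A positive solution of the profile equation on `[0, ∞)` that decays at infinity. It is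
`IsReactiveProfile` for an arbitrary constant `κ` and an arbitrary slope at `0`. -/
structure IsDecayingProfile (n : ℕ) (κ : ℝ) (η : ℝ → ℝ) : Prop where
  contDiffOn : ContDiffOn ℝ 2 η (Ici 0)
  pos : ∀ z ∈ Ici (0 : ℝ), 0 < η z
  derivWithin_derivWithin : ∀ z ∈ Ici (0 : ℝ),
    derivWithin (derivWithin η (Ici 0)) (Ici 0) z = reactionBase κ η z ^ n
  tendsto : Tendsto η atTop (𝓝 0)

/-- The relations between the parameters under which `l * z ^ (-δ)` solves `y'' = (2 κ z y) ^ n`,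
the equation that governs the tail of a decaying profile. -/
structure IsTailBalance (n : ℕ) (κ δ l : ℝ) : Prop where
  slope_pos : 0 < κ
  one_lt_exponent : 1 < δ
  coeff_pos : 0 < l
  exponent_eq : n * (δ - 1) = δ + 2
  coeff_eq : (2 * κ * l) ^ n = l * (δ * (δ + 1))

namespace IsTailBalance

variable {n : ℕ} {κ δ l a : ℝ} {s : Set ℝ}

theorem ne_zero (h : IsTailBalance n κ δ l) : n ≠ 0 := by
  rintro rfl
  have hexp : (0 : ℕ) * (δ - 1) = δ + 2 := h.exponent_eq
  rw [Nat.cast_zero, zero_mul] at hexp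
  linarith [h.one_lt_exponent]

theorem hasTwoDerivsOn (h : IsTailBalance n κ δ l) (hs : ∀ z ∈ s, 0 < z + a) :
    HasTwoDerivsOn (fun z => l * (z + a) ^ (-δ)) (fun z => l * (-δ * (z + a) ^ (-δ - 1)))
      (fun z => (2 * κ * (z + a) * (l * (z + a) ^ (-δ))) ^ n) s := by
  refine ((hasTwoDerivsOn_rpow_add (-δ) hs).const_mul l).congr_deriv fun z hz => ?_
  have hpow : (z + a) ^ (-δ - 2) = ((z + a) * (z + a) ^ (-δ)) ^ n := by
    rw [← Real.rpow_one_add' (hs z hz).le (by linarith [h.one_lt_exponent]),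
      ← Real.rpow_mul_natCast (hs z hz).le]
    congr 1
    linarith [h.exponent_eq]
  calc l * (-δ * (-δ - 1) * (z + a) ^ (-δ - 2))
      = l * (δ * (δ + 1)) * (z + a) ^ (-δ - 2) := by ring
    _ = (2 * κ * (z + a) * (l * (z + a) ^ (-δ))) ^ n := by
        rw [hpow, ← h.coeff_eq, ← mul_pow]
        ring

theorem tendsto_tail (h : IsTailBalance n κ δ l) :
    Tendsto (fun z => l * (z + a) ^ (-δ)) atTop (𝓝 0) := by
  simpa using ((tendsto_rpow_neg_atTop (zero_lt_one.trans h.one_lt_exponent)).comp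
    (tendsto_atTop_add_const_right _ a tendsto_id)).const_mul l

end IsTailBalance

namespace IsDecayingProfile

variable {n : ℕ} {κ δ l : ℝ} {η : ℝ → ℝ}

theorem hasTwoDerivsOn (hη : IsDecayingProfile n κ η) :
    HasTwoDerivsOn η (derivWithin η (Ici 0)) (fun z => reactionBase κ η z ^ n) (Ici 0) :=
  (HasTwoDerivsOn.of_contDiffOn hη.contDiffOn (uniqueDiffOn_Ici 0)).congr_deriv
    hη.derivWithin_derivWithin

theorem reactionBase_pos (hη : IsDecayingProfile n κ η) (hκ : 0 < κ) :
    ∀ z ∈ Ici 0, 0 < reactionBase κ η z := fun z hz => by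
  have := hη.pos z hz
  have : 0 ≤ z := hz
  unfold reactionBase
  positivity

theorem le_tail (hη : IsDecayingProfile n κ η) (h : IsTailBalance n κ δ l) :
    ∀ z ∈ Ioi 0, η z ≤ l * z ^ (-δ) := fun z (hz : 0 < z) => by
  have hδ : 0 < δ := zero_lt_one.trans h.one_lt_exponent
  obtain ⟨a, hηa, ha, haz⟩ : ∃ a, η a ≤ l * (a + 0) ^ (-δ) ∧ 0 < a ∧ a ≤ z := by
    have hlarge : Tendsto (fun a => l * a ^ (-δ)) (𝓝[>] 0) atTop :=
      (tendsto_rpow_neg_nhdsGT_zero (neg_lt_zero.2 hδ)).const_mul_atTop h.coeff_pos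
    have hnear : ∀ᶠ a in 𝓝[>] 0, η a < η 0 + 1 :=
      ((hη.contDiffOn.continuousOn 0 self_mem_Ici).mono Ioi_subset_Ici_self).eventually_lt_const
        (lt_add_one _)
    refine ((hlarge.eventually_ge_atTop (η 0 + 1)).and
      (hnear.and (Ioc_mem_nhdsGT hz))).exists.imp fun a ⟨h₁, h₂, h₃⟩ => ⟨?_, h₃⟩
    simpa using h₂.le.trans h₁
  have hsub : Ici a ⊆ Ici 0 := Ici_subset_Ici.2 ha.le
  have hS := h.hasTwoDerivsOn (a := 0) (s := Ici a) fun x hx => by linarith [mem_Ici.1 hx]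
  suffices 0 ≤ l * (z + 0) ^ (-δ) - η z by simpa using this
  refine (hS.sub (hη.hasTwoDerivsOn.mono hsub)).nonneg_on_Ici (sub_nonneg.2 hηa)
    (by simpa using (h.tendsto_tail (a := 0)).sub hη.tendsto) (fun x hx hneg => ?_) z haz
  have hx₀ : 0 < x := ha.trans hx
  have hκ := h.slope_pos
  have hl := h.coeff_pos
  refine sub_neg.2 (pow_lt_pow_left₀ ?_ (by positivity) h.ne_zero)
  calc 2 * κ * (x + 0) * (l * (x + 0) ^ (-δ)) < 2 * κ * (x + 0) * η x := by
        gcongr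
        exact sub_neg.1 hneg
    _ ≤ reactionBase κ η x := by simp [reactionBase, sq_nonneg]

theorem exists_shifted_tail_le (hη : IsDecayingProfile n κ η) (h : IsTailBalance n κ δ l) :
    ∃ a > 0, ∀ z ∈ Ici 0, l * (z + a) ^ (-δ) ≤ η z := by
  have hκ := h.slope_pos
  have hl := h.coeff_pos
  have hδ : 0 < δ := zero_lt_one.trans h.one_lt_exponent
  -- `S ≤ 2 κ a` for the shifted tail `S` makes it a subsolution: `2 κ z S + S² ≤ 2 κ (z + a) S`.
  obtain ⟨a, ha, haη, haκ⟩ : ∃ a, 0 < a ∧ l * a ^ (-δ) ≤ η 0 ∧ l * a ^ (-δ) ≤ 2 * κ * a := by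
    have hsmall := h.tendsto_tail (a := 0)
    simp only [add_zero] at hsmall
    have h₀ := hη.pos 0 self_mem_Ici
    refine ((eventually_ge_atTop 1).and ((hsmall.eventually_le_const h₀).and
      (hsmall.eventually_le_const (show 0 < 2 * κ by positivity)))).exists.imp
        fun a ⟨h₁, h₂, h₃⟩ => ⟨by linarith, h₂, h₃.trans ?_⟩
    exact le_mul_of_one_le_right (by positivity) h₁
  have hS := h.hasTwoDerivsOn (a := a) (s := Ici 0) fun x hx => by linarith [mem_Ici.1 hx]
  refine ⟨a, ha, fun z hz => sub_nonneg.1 ?_⟩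
  refine (hη.hasTwoDerivsOn.sub hS).nonneg_on_Ici (by simpa using haη)
    (by simpa using hη.tendsto.sub h.tendsto_tail) (fun x (hx : 0 < x) hneg => ?_) z hz
  have hηx := hη.pos x hx.le
  have hηS : η x < l * (x + a) ^ (-δ) := sub_neg.1 hneg
  have hSa : l * (x + a) ^ (-δ) ≤ 2 * κ * a := by
    refine le_trans ?_ haκ
    gcongr l * ?_
    exact Real.rpow_le_rpow_of_nonpos ha (by linarith) (by linarith)
  refine sub_neg.2 (pow_lt_pow_left₀ ?_ (hη.reactionBase_pos hκ x hx.le).le h.ne_zero)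
  calc reactionBase κ η x = (2 * κ * x + η x) * η x := by unfold reactionBase; ring
    _ < (2 * κ * x + 2 * κ * a) * (l * (x + a) ^ (-δ)) := by gcongr; linarith
    _ = 2 * κ * (x + a) * (l * (x + a) ^ (-δ)) := by ring

theorem hasLeadingTerm (hη : IsDecayingProfile n κ η) (h : IsTailBalance n κ δ l) :
    HasLeadingTerm η l (-δ) := by
  obtain ⟨a, -, ha⟩ := hη.exists_shifted_tail_le h
  refine ((hasLeadingTerm_rpow_add a (-δ)).const_mul l).congr .rfl (mul_one l) rfl
    |>.squeeze ?_ ?_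
  · filter_upwards [eventually_ge_atTop 0] using ha
  · filter_upwards [eventually_gt_atTop 0] using hη.le_tail h

end IsDecayingProfile

theorem HasLeadingTerm.reactionBase {κ δ l : ℝ} {η : ℝ → ℝ} (hη : HasLeadingTerm η l (-δ))
    (hδ : 0 ≤ δ) : HasLeadingTerm (reactionBase κ η) (2 * κ * l) (1 - δ) := by
  have hsq : HasLeadingTerm (fun z => η z ^ 2) 0 (1 - δ) :=
    (hη.pow 2).zero_of_le (by push_cast; linarith)
  refine (((hasLeadingTerm_id.mul hη).const_mul (2 * κ)).congr .rfl rfl (by ring)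
    |>.add hsq).congr (.of_forall fun z => ?_) (by ring) rfl
  unfold _root_.reactionBase
  ring

/-- The coefficient of `h` in the corrector equation, that is the derivative of
`(2 κ z η + η ^ 2) ^ n` with respect to `η`. -/
def linearizedCoeff (n : ℕ) (κ : ℝ) (η : ℝ → ℝ) (z : ℝ) : ℝ :=
  n * reactionBase κ η z ^ (n - 1) * (2 * κ * z + 2 * η z)

/-- The part of the corrector equation that does not involve `h`, moved to the right-hand side. -/
noncomputable def correctorForcing (n : ℕ) (κ κ₃ γ α : ℝ) (η : ℝ → ℝ) (z : ℝ) : ℝ :=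
  n * reactionBase κ η z ^ (n - 1) * (2 * κ₃ * z ^ 3 * η z) - γ * η z
    - α * z * derivWithin η (Ici 0) z

/-- `IsCorrector` for arbitrary values of the constants, with slope `b` at `0` and with
`l₀ * z ^ (2 - δ)` as the prescribed behaviour at infinity. -/
def IsCorrectorFor (n : ℕ) (κ κ₃ γ α δ l₀ b : ℝ) (η h : ℝ → ℝ) : Prop :=
  ContDiffOn ℝ 2 h (Ici 0) ∧
  (∀ z ∈ Ici (0 : ℝ),
    derivWithin (derivWithin h (Ici 0)) (Ici 0) z + γ * η z + α * z * derivWithin η (Ici 0) z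
      = n * (2 * κ * z * η z + η z ^ 2) ^ (n - 1)
          * ((2 * κ * z + 2 * η z) * h z + 2 * κ₃ * z ^ 3 * η z)) ∧
  derivWithin h (Ici 0) 0 = b ∧
  Tendsto (fun z => h z - l₀ * z ^ (2 - δ)) atTop (𝓝 0)

/-- `l₀ * z ^ (2 - δ)` solves the corrector equation to leading order at infinity when `η` is
replaced by its tail `l * z ^ (-δ)`. -/
def IsCorrectorBalance (n : ℕ) (κ κ₃ γ α δ l l₀ : ℝ) : Prop :=
  l₀ * ((2 - δ) * (1 - δ)) + γ * l - α * δ * l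
    = n * (2 * κ * l) ^ (n - 1) * (2 * κ * l₀ + 2 * κ₃ * l)

section Corrector

variable {n : ℕ} {κ κ₃ γ α δ l l₀ b : ℝ} {η : ℝ → ℝ}

theorem isCorrectorFor_iff {h : ℝ → ℝ} (hη : ContDiffOn ℝ 2 η (Ici 0)) :
    IsCorrectorFor n κ κ₃ γ α δ l₀ b η h ↔
      ∃ h', HasTwoDerivsOn h h'
          (fun z => linearizedCoeff n κ η z * h z + correctorForcing n κ κ₃ γ α η z) (Ici 0) ∧
        h' 0 = b ∧ Tendsto (fun z => h z - l₀ * z ^ (2 - δ)) atTop (𝓝 0) := by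
  have huniq := uniqueDiffOn_Ici (0 : ℝ)
  constructor
  · rintro ⟨hC, heq, hb, hlim⟩
    refine ⟨_, (HasTwoDerivsOn.of_contDiffOn hC huniq).congr_deriv fun z hz => ?_, hb, hlim⟩
    unfold linearizedCoeff correctorForcing reactionBase
    linear_combination heq z hz
  · rintro ⟨h', hh, hb, hlim⟩
    refine ⟨hh.contDiffOn huniq ?_, fun z hz => ?_,
      (hh.derivWithin_eqOn huniq self_mem_Ici).trans hb, hlim⟩
    · have hη' := hη.continuousOn_derivWithin huniq one_le_two
      have hη₀ := hη.continuousOn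
      have hh₀ := hh.continuousOn
      unfold linearizedCoeff correctorForcing reactionBase
      fun_prop
    · rw [hh.derivWithin_derivWithin_eqOn huniq hz]
      unfold linearizedCoeff correctorForcing reactionBase
      ring

theorem continuousOn_linearizedCoeff (hη : ContinuousOn η (Ici 0)) :
    ContinuousOn (linearizedCoeff n κ η) (Ici 0) := by
  unfold linearizedCoeff reactionBase
  fun_prop

theorem IsDecayingProfile.linearizedCoeff_pos (hη : IsDecayingProfile n κ η) (hκ : 0 < κ)
    (hn : n ≠ 0) : ∀ z ∈ Ici 0, 0 < linearizedCoeff n κ η z := fun z hz => by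
  have := hη.pos z hz
  have := hη.reactionBase_pos hκ z hz
  have : 0 ≤ z := hz
  unfold linearizedCoeff
  positivity

theorem IsCorrectorFor.eqOn {h₁ h₂ : ℝ → ℝ} (hη : ContDiffOn ℝ 2 η (Ici 0))
    (hq : ∀ z ∈ Ici 0, 0 ≤ linearizedCoeff n κ η z)
    (h₁_corr : IsCorrectorFor n κ κ₃ γ α δ l₀ b η h₁)
    (h₂_corr : IsCorrectorFor n κ κ₃ γ α δ l₀ b η h₂) : EqOn h₁ h₂ (Ici 0) := fun z hz => by
  obtain ⟨h₁', hd₁, hb₁, hlim₁⟩ := (isCorrectorFor_iff hη).1 h₁_corr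
  obtain ⟨h₂', hd₂, hb₂, hlim₂⟩ := (isCorrectorFor_iff hη).1 h₂_corr
  have hdiff := (hd₁.sub hd₂).congr_deriv
    (g'' := fun z => linearizedCoeff n κ η z * (h₁ z - h₂ z)) fun z _ => by ring
  exact sub_eq_zero.1 (hdiff.eqOn_zero_of_linear hq (by rw [hb₁, hb₂, sub_self])
    (by simpa using hlim₁.sub hlim₂) hz)

/-- An approximate corrector with leading term `l₀ * z ^ (2 - δ)`. The `z ^ 2 * η` part makes the
`η'` terms cancel in `ansatzResidual`. -/
noncomputable def correctorAnsatz (α δ l l₀ : ℝ) (η : ℝ → ℝ) (z : ℝ) : ℝ :=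
  -(α / 4) * (z ^ 2 * η z) + (l₀ + α / 4 * l) * (z + 1) ^ (2 - δ)

/-- What remains of the corrector equation when `correctorAnsatz` is inserted: the right-hand side
minus the second derivative. -/
noncomputable def ansatzResidual (n : ℕ) (κ κ₃ γ α δ l l₀ : ℝ) (η : ℝ → ℝ) (z : ℝ) : ℝ :=
  linearizedCoeff n κ η z * correctorAnsatz α δ l l₀ η z
    + n * reactionBase κ η z ^ (n - 1) * (2 * κ₃ * z ^ 3 * η z) - γ * η z
    + α / 4 * (2 * η z + z ^ 2 * reactionBase κ η z ^ n)
    - (l₀ + α / 4 * l) * ((2 - δ) * (1 - δ) * (z + 1) ^ (-δ))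

theorem hasTwoDerivsOn_correctorAnsatz (hη : IsDecayingProfile n κ η) :
    HasTwoDerivsOn (correctorAnsatz α δ l l₀ η)
      (fun z => -(α / 4) * (2 * z * η z + z ^ 2 * derivWithin η (Ici 0) z)
        + (l₀ + α / 4 * l) * ((2 - δ) * (z + 1) ^ (1 - δ)))
      (fun z => linearizedCoeff n κ η z * correctorAnsatz α δ l l₀ η z
        + correctorForcing n κ κ₃ γ α η z - ansatzResidual n κ κ₃ γ α δ l l₀ η z) (Ici 0) := by
  have hpow := hasTwoDerivsOn_rpow_add (a := 1) (2 - δ) (s := Ici 0)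
    fun z hz => by linarith [mem_Ici.1 hz]
  rw [show 2 - δ - 1 = 1 - δ by ring, show 2 - δ - 2 = -δ by ring] at hpow
  refine ((((hasTwoDerivsOn_sq (Ici 0)).mul hη.hasTwoDerivsOn).const_mul (-(α / 4))).add
    (hpow.const_mul (l₀ + α / 4 * l))).congr_deriv fun z _ => ?_
  unfold correctorForcing ansatzResidual
  ring

theorem continuousOn_ansatzResidual (hη : ContinuousOn η (Ici 0)) :
    ContinuousOn (ansatzResidual n κ κ₃ γ α δ l l₀ η) (Ici 0) := by
  have hpow (p : ℝ) : ContinuousOn (fun z : ℝ => (z + 1) ^ p) (Ici 0) :=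
    (hasTwoDerivsOn_rpow_add p fun z hz => by linarith [mem_Ici.1 hz]).continuousOn
  have hq : ContinuousOn (linearizedCoeff n κ η) (Ici 0) := continuousOn_linearizedCoeff hη
  unfold ansatzResidual correctorAnsatz reactionBase
  fun_prop

theorem HasLeadingTerm.correctorAnsatz (hη : HasLeadingTerm η l (-δ)) :
    HasLeadingTerm (correctorAnsatz α δ l l₀ η) l₀ (2 - δ) :=
  ((((hasLeadingTerm_id.pow 2).mul hη).const_mul (-(α / 4))).congr .rfl rfl
    (by push_cast; ring) |>.add ((hasLeadingTerm_rpow_add 1 (2 - δ)).const_mul (l₀ + α / 4 * l))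
    ).congr .rfl (by ring) rfl

namespace IsTailBalance

theorem hasLeadingTerm_reactionBase_pow (h : IsTailBalance n κ δ l)
    (hη : HasLeadingTerm η l (-δ)) :
    HasLeadingTerm (fun z => reactionBase κ η z ^ n) (l * (δ * (δ + 1))) (-2 - δ) :=
  ((hη.reactionBase (zero_le_one.trans h.one_lt_exponent.le)).pow n).congr .rfl h.coeff_eq
    (by linarith [h.exponent_eq])

theorem hasLeadingTerm_reactionBase_pow_pred (h : IsTailBalance n κ δ l)
    (hη : HasLeadingTerm η l (-δ)) :
    HasLeadingTerm (fun z => n * reactionBase κ η z ^ (n - 1)) (n * (2 * κ * l) ^ (n - 1)) (-3) :=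
  (((hη.reactionBase (zero_le_one.trans h.one_lt_exponent.le)).pow (n - 1)).const_mul n).congr
    .rfl rfl (by
      rw [Nat.cast_pred (Nat.pos_of_ne_zero h.ne_zero)]
      linarith [h.exponent_eq])

theorem hasLeadingTerm_linearizedCoeff (h : IsTailBalance n κ δ l)
    (hη : HasLeadingTerm η l (-δ)) :
    HasLeadingTerm (linearizedCoeff n κ η) (n * (2 * κ * l) ^ (n - 1) * (2 * κ)) (-2) := by
  have hη₁ : HasLeadingTerm (fun z => 2 * η z) 0 1 :=
    (hη.const_mul 2).zero_of_le (by linarith [h.one_lt_exponent])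
  have hsum : HasLeadingTerm (fun z => 2 * κ * z + 2 * η z) (2 * κ) 1 :=
    ((hasLeadingTerm_id.const_mul (2 * κ)).add hη₁).congr .rfl (by ring) rfl
  exact ((h.hasLeadingTerm_reactionBase_pow_pred hη).mul hsum).congr .rfl rfl (by norm_num)

theorem hasLeadingTerm_ansatzResidual (h : IsTailBalance n κ δ l)
    (hbal : IsCorrectorBalance n κ κ₃ γ α δ l l₀) (hη : HasLeadingTerm η l (-δ)) :
    HasLeadingTerm (ansatzResidual n κ κ₃ γ α δ l l₀ η) 0 (-δ) := by
  have hlinear := ((h.hasLeadingTerm_linearizedCoeff hη).mul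
    (hη.correctorAnsatz (α := α) (l₀ := l₀))).congr (q := -δ) .rfl rfl (by ring)
  have hcubic := ((h.hasLeadingTerm_reactionBase_pow_pred hη).mul
    (((hasLeadingTerm_id.pow 3).mul hη).const_mul (2 * κ₃))).congr (q := -δ) .rfl rfl
      (by push_cast; ring)
  have hpow := ((hasLeadingTerm_id.pow 2).mul (h.hasLeadingTerm_reactionBase_pow hη)).congr
    (q := -δ) .rfl rfl (by push_cast; ring)
  have hα := ((hη.const_mul 2).add hpow).const_mul (α / 4)
  have hshift := ((hasLeadingTerm_rpow_add 1 (-δ)).const_mul ((2 - δ) * (1 - δ))).const_mul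
    (l₀ + α / 4 * l)
  refine ((((hlinear.add hcubic).add (hη.const_mul (-γ))).add hα).add
    (hshift.const_mul (-1))).congr (.of_forall fun z => ?_) ?_ rfl
  · unfold ansatzResidual
    ring
  · unfold IsCorrectorBalance at hbal
    linear_combination -hbal

theorem exists_isCorrectorFor (h : IsTailBalance n κ δ l)
    (hbal : IsCorrectorBalance n κ κ₃ γ α δ l l₀) (hη : IsDecayingProfile n κ η) (b : ℝ) :
    ∃ u, IsCorrectorFor n κ κ₃ γ α δ l₀ b η u := by
  have hδ := h.one_lt_exponent
  have hη_tail := hη.hasLeadingTerm h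
  have hη_cont := hη.contDiffOn.continuousOn
  have hq_coeff : n * (2 * κ * l) ^ (n - 1) * (2 * κ) ≠ 0 := by
    simp [h.ne_zero, h.slope_pos.ne', h.coeff_pos.ne']
  have hq_far := (h.hasLeadingTerm_linearizedCoeff hη_tail).isTheta hq_coeff
  have hG_far := (h.hasLeadingTerm_ansatzResidual hbal hη_tail).isBigO_of_zero
  rw [show -δ - 1 = -2 - (δ - 1) by ring] at hG_far
  have hψ := hasTwoDerivsOn_correctorAnsatz (κ₃ := κ₃) (γ := γ) (α := α) (δ := δ) (l := l)
    (l₀ := l₀) hη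
  obtain ⟨v, v', hv, hb, hv_lim⟩ := exists_hasTwoDerivsOn_Ici_linear_tendsto_zero
    (continuousOn_linearizedCoeff hη_cont) (continuousOn_ansatzResidual hη_cont)
    (hη.linearizedCoeff_pos h.slope_pos h.ne_zero) hq_far.isBigO_symm (sub_pos.2 hδ) hG_far
    (b - (l₀ + α / 4 * l) * (2 - δ))
  refine ⟨_, (isCorrectorFor_iff hη.contDiffOn).2
    ⟨_, (hv.add hψ).congr_deriv fun z _ => by ring, by simp [hb], ?_⟩⟩
  have hψ_lim := (hη_tail.correctorAnsatz (α := α) (l₀ := l₀)).tendsto_sub (by linarith)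
  exact (by simpa using hv_lim.add hψ_lim : Tendsto _ _ _).congr fun z => by ring

end IsTailBalance

end Corrector

theorem corrector_exists_unique_general {n : ℕ} {κ κ₃ γ α δ l l₀ b : ℝ} {η : ℝ → ℝ}
    (h : IsTailBalance n κ δ l) (hbal : IsCorrectorBalance n κ κ₃ γ α δ l l₀)
    (hη : IsDecayingProfile n κ η) :
    (∃ u, IsCorrectorFor n κ κ₃ γ α δ l₀ b η u) ∧
      ∀ u u', IsCorrectorFor n κ κ₃ γ α δ l₀ b η u → IsCorrectorFor n κ κ₃ γ α δ l₀ b η u' →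
        EqOn u u' (Ici 0) :=
  ⟨h.exists_isCorrectorFor hbal hη b, fun _ _ => IsCorrectorFor.eqOn hη.contDiffOn
    fun z hz => (hη.linearizedCoeff_pos h.slope_pos h.ne_zero z hz).le⟩

section PaperConstants

variable {n : ℕ}

theorem kap_pos : 0 < kap := by
  unfold kap
  positivity

theorem one_lt_del (hn : 2 ≤ n) : 1 < del n := by
  have : (2 : ℝ) ≤ n := by exact_mod_cast hn
  exact (one_lt_div (by linarith)).2 (by linarith)

theorem natCast_mul_del_sub_one (hn : 2 ≤ n) : n * (del n - 1) = del n + 2 := by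
  have : (2 : ℝ) ≤ n := by exact_mod_cast hn
  have hdel : del n * (n - 1) = n + 2 := div_mul_cancel₀ _ (by linarith)
  linarith

theorem lam_pow_pred (hn : 2 ≤ n) : lam n ^ (n - 1) = del n * (del n + 1) / (2 * kap) ^ n := by
  have hδ := one_lt_del hn
  have hκ := kap_pos
  unfold lam
  rw [one_div, ← Nat.cast_pred (by omega)]
  exact Real.rpow_inv_natCast_pow (by positivity) (by omega)

theorem isTailBalance_lam (hn : 2 ≤ n) : IsTailBalance n kap (del n) (lam n) where
  slope_pos := kap_pos
  one_lt_exponent := one_lt_del hn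
  coeff_pos := by
    have hδ := one_lt_del hn
    have hκ := kap_pos
    unfold lam
    positivity
  exponent_eq := natCast_mul_del_sub_one hn
  coeff_eq := by
    have hκ := kap_pos
    rw [mul_pow, ← mul_pow_sub_one (by omega) (lam n), lam_pow_pred hn]
    field_simp

theorem gam_mul_del_add_one (hn : 2 ≤ n) : gam n * (del n + 1) = eps n := by
  have : (2 : ℝ) ≤ n := by exact_mod_cast hn
  have : (n : ℝ) - 1 ≠ 0 := by linarith
  unfold gam del eps
  field_simp
  ring

theorem isCorrectorBalance_lam0 (hn : 2 ≤ n) :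
    IsCorrectorBalance n kap kap3 (gam n) (alph n) (del n) (lam n) (lam0 n) := by
  have htail := isTailBalance_lam hn
  have hκ := kap_pos
  have hδ := one_lt_del hn
  have hl := htail.coeff_pos
  have hpow : (2 * kap * lam n) ^ (n - 1) = del n * (del n + 1) / (2 * kap) := by
    rw [eq_div_iff (by positivity), ← mul_left_inj' hl.ne', mul_assoc,
      pow_sub_one_mul htail.ne_zero, htail.coeff_eq, mul_comm]
  have hden : (n - 1) * del n * (del n + 1) + 2 * (2 * del n - 1) ≠ 0 := by
    have : (2 : ℝ) ≤ n := by exact_mod_cast hn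
    have : 0 < n - (1 : ℝ) := by linarith
    have : 0 < 2 * del n - 1 := by linarith
    positivity
  have hlam0 : lam0 n * ((n - 1) * del n * (del n + 1) + 2 * (2 * del n - 1))
      = lam n / (2 * kap) * (-2 * n * kap3 * del n * (del n + 1)
          - kap * (del n - 2 * (gam n * (del n + 1)))) := by
    rw [gam_mul_del_add_one hn]
    exact div_mul_cancel₀ _ hden
  unfold IsCorrectorBalance alph
  rw [hpow]
  field_simp at hlam0 ⊢
  linear_combination -hlam0

theorem IsReactiveProfile.isDecayingProfile {η : ℝ → ℝ} (hη : IsReactiveProfile n η) :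
    IsDecayingProfile n kap η :=
  let ⟨hC, hpos, heq, _, hlim⟩ := hη
  ⟨hC, hpos, heq, hlim⟩

end PaperConstants

/-- For every integer n ≥ 4 there exists a unique corrector h. -/
theorem corrector_exists_unique (n : ℕ) (hn : 4 ≤ n)
    (η : ℝ → ℝ) (hη : IsReactiveProfile n η) :
    (∃ h : ℝ → ℝ, IsCorrector n η h) ∧
    (∀ h h' : ℝ → ℝ, IsCorrector n η h → IsCorrector n η h' →
      Set.EqOn h h' (Set.Ici 0)) :=
  have hn₂ : 2 ≤ n := by omega
  corrector_exists_unique_general (isTailBalance_lam hn₂) (isCorrectorBalance_lam0 hn₂)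
    hη.isDecayingProfile
end
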